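/- arXiv:math/9712237 — 8 statements merged into one kernel-verified Lean document; each statement's English description precedes it below -/
import Mathlib

section
/- Let q be a real number with q > 1 and let u be a real number with 0 < u < 1. Then the infinite product ∏_{r=1}^∞ 1/(1 − u·q^{−r}) converges and equals the convergent series ∑_{n=0}^∞ u^n · q^{binom(n,2)} / ((q^n − 1)(q^{n−1} − 1)⋯(q − 1)), where the n = 0 term is 1. -/
/-!
With `p = q⁻¹` and `z = u / q`, the series is Euler's `q`-exponential `E(z) = ∑ zⁿ / (p; p)ₙ`.
Comparing coefficients gives the functional equation `E(p z) = (1 - z) E(z)`, which iterates to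
`E(p ^ N z) = (z; p)_N E(z)`. Letting `N → ∞`, continuity at `0` yields `1 = (z; p)_∞ E(z)`.
-/

open Filter Finset Topology

section CommRing

variable {R : Type*} [CommRing R]

/-- The `q`-Pochhammer symbol `(a; p)ₙ = (1 - a) (1 - a p) ⋯ (1 - a pⁿ⁻¹)`, written with base `p`
since it is applied at `p = q⁻¹`: partial products and denominators are `(z; p)ₙ` and `(p; p)ₙ`. -/
def qPochhammer (a p : R) (n : ℕ) : R := ∏ k ∈ range n, (1 - a * p ^ k)

@[simp]
theorem qPochhammer_zero (a p : R) : qPochhammer a p 0 = 1 := prod_range_zero _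

theorem qPochhammer_succ (a p : R) (n : ℕ) :
    qPochhammer a p (n + 1) = qPochhammer a p n * (1 - a * p ^ n) :=
  prod_range_succ _ _

theorem qPochhammer_self_succ (p : R) (n : ℕ) :
    qPochhammer p p (n + 1) = qPochhammer p p n * (1 - p ^ (n + 1)) := by
  rw [qPochhammer_succ, pow_succ']

end CommRing

theorem succ_choose_two (n : ℕ) : (n + 1).choose 2 = n + n.choose 2 := by
  rw [Nat.choose_succ_succ' n 1, Nat.choose_one_right]

theorem prod_pow_sub_one_eq_pow_mul_qPochhammer_inv {K : Type*} [Field K] {q : K} (hq : q ≠ 0)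
    (n : ℕ) :
    ∏ k ∈ range n, (q ^ (k + 1) - 1) = q ^ (n + 1).choose 2 * qPochhammer q⁻¹ q⁻¹ n := by
  induction n with
  | zero => simp
  | succ n ih =>
    have factor : q ^ (n + 1) - 1 = q ^ (n + 1) * (1 - q⁻¹ ^ (n + 1)) := by
      rw [mul_sub, mul_one, ← mul_pow, mul_inv_cancel₀ hq, one_pow]
    rw [prod_range_succ, ih, factor, qPochhammer_self_succ, succ_choose_two (n + 1), pow_add]
    ring

theorem pow_mul_pow_choose_two_div_prod_pow_sub_one {K : Type*} [Field K] {q : K} (hq : q ≠ 0)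
    (u : K) (n : ℕ) :
    u ^ n * q ^ n.choose 2 / ∏ k ∈ range n, (q ^ (k + 1) - 1) =
      (u / q) ^ n / qPochhammer q⁻¹ q⁻¹ n := by
  rw [prod_pow_sub_one_eq_pow_mul_qPochhammer_inv hq, succ_choose_two, pow_add, div_pow, div_div,
    mul_right_comm, mul_div_mul_right _ _ (pow_ne_zero _ hq)]

section NormedField

variable {𝕜 : Type*} [NormedField 𝕜] {p z : 𝕜}

/-- Euler's `q`-exponential `∑ zⁿ / (p; p)ₙ`, to be used for `‖p‖ < 1` and `‖z‖ < 1`, where the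
series converges. -/
noncomputable def qExp (p z : 𝕜) : 𝕜 := ∑' n : ℕ, z ^ n / qPochhammer p p n

@[simp]
theorem qExp_zero_right (p : 𝕜) : qExp p 0 = 1 := by
  rw [qExp, tsum_eq_single 0 fun n hn ↦ by rw [zero_pow hn, zero_div]]
  simp

theorem one_sub_pow_succ_ne_zero (hp : ‖p‖ < 1) (n : ℕ) : 1 - p ^ (n + 1) ≠ 0 := by
  refine sub_ne_zero.2 fun h ↦ ?_
  have : ‖p ^ (n + 1)‖ < 1 := norm_pow p _ ▸ pow_lt_one₀ (norm_nonneg p) hp n.succ_ne_zero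
  exact this.ne (h ▸ norm_one)

theorem tendsto_norm_one_sub_pow_succ (hp : ‖p‖ < 1) :
    Tendsto (fun n : ℕ ↦ ‖1 - p ^ (n + 1)‖) atTop (𝓝 1) := by
  have pow_tendsto := (tendsto_pow_atTop_nhds_zero_of_norm_lt_one hp).comp (tendsto_add_atTop_nat 1)
  simpa using (pow_tendsto.const_sub 1).norm

theorem summable_pow_div_norm_qPochhammer_self (hp : ‖p‖ < 1) {r : ℝ} (hr₀ : 0 ≤ r) (hr : r < 1) :
    Summable fun n : ℕ ↦ r ^ n / ‖qPochhammer p p n‖ := by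
  obtain ⟨s, hrs, hs⟩ := exists_between hr
  have ratio_tendsto : Tendsto (fun n : ℕ ↦ r / ‖1 - p ^ (n + 1)‖) atTop (𝓝 r) := by
    simpa only [Pi.div_def, div_one] using
      (tendsto_const_nhds (x := r)).div (tendsto_norm_one_sub_pow_succ hp) one_ne_zero
  refine summable_of_ratio_norm_eventually_le hs ?_
  filter_upwards [ratio_tendsto.eventually_le_const hrs] with n hn
  have term_succ : r ^ (n + 1) / ‖qPochhammer p p (n + 1)‖ =
      r / ‖1 - p ^ (n + 1)‖ * (r ^ n / ‖qPochhammer p p n‖) := by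
    rw [qPochhammer_self_succ, norm_mul, pow_succ', mul_comm ‖qPochhammer p p n‖, mul_div_mul_comm]
  rw [Real.norm_of_nonneg (by positivity), Real.norm_of_nonneg (by positivity), term_succ]
  gcongr

variable [CompleteSpace 𝕜]

theorem summable_pow_div_qPochhammer_self (hp : ‖p‖ < 1) (hz : ‖z‖ < 1) :
    Summable fun n : ℕ ↦ z ^ n / qPochhammer p p n :=
  .of_norm <| by
    simpa only [norm_div, norm_pow] using
      summable_pow_div_norm_qPochhammer_self hp (norm_nonneg z) hz

theorem continuousAt_qExp (hp : ‖p‖ < 1) (hz : ‖z‖ < 1) : ContinuousAt (qExp p) z := by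
  obtain ⟨r, hzr, hr⟩ := exists_between hz
  have continuousOn_closedBall : ContinuousOn (qExp p) (Metric.closedBall 0 r) := by
    refine continuousOn_tsum (fun n ↦ by fun_prop)
      (summable_pow_div_norm_qPochhammer_self hp ((norm_nonneg z).trans hzr.le) hr)
      fun n w hw ↦ ?_
    rw [norm_div, norm_pow]
    gcongr
    exact mem_closedBall_zero_iff.1 hw
  exact continuousOn_closedBall.continuousAt
    (Metric.closedBall_mem_nhds_of_mem (mem_ball_zero_iff.2 hzr))

theorem qExp_mul_left (hp : ‖p‖ < 1) (hz : ‖z‖ < 1) : qExp p (p * z) = (1 - z) * qExp p z := by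
  have hpz : ‖p * z‖ < 1 := by
    rw [norm_mul]
    exact mul_lt_one_of_nonneg_of_lt_one_left (norm_nonneg p) hp hz.le
  have summable_z := summable_pow_div_qPochhammer_self hp hz
  have summable_pz := summable_pow_div_qPochhammer_self hp hpz
  have coeff_sub (n : ℕ) :
      z ^ (n + 1) / qPochhammer p p (n + 1) - (p * z) ^ (n + 1) / qPochhammer p p (n + 1) =
        z * (z ^ n / qPochhammer p p n) := by
    rw [← sub_div, qPochhammer_self_succ, mul_pow, ← one_sub_mul, mul_comm (1 - p ^ (n + 1)),
      mul_div_mul_right _ _ (one_sub_pow_succ_ne_zero hp n), pow_succ', mul_div_assoc]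
  have qExp_sub : qExp p z - qExp p (p * z) = z * qExp p z := by
    simp only [qExp]
    rw [← summable_z.tsum_sub summable_pz, (summable_z.sub summable_pz).tsum_eq_zero_add,
      ← tsum_mul_left]
    simp only [coeff_sub, pow_zero, sub_self, zero_add]
  linear_combination -qExp_sub

theorem qExp_mul_pow (hp : ‖p‖ < 1) (hz : ‖z‖ < 1) (n : ℕ) :
    qExp p (z * p ^ n) = qPochhammer z p n * qExp p z := by
  induction n with
  | zero => simp
  | succ n ih =>
    have norm_lt : ‖z * p ^ n‖ < 1 := by
      rw [norm_mul, norm_pow]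
      exact mul_lt_one_of_nonneg_of_lt_one_left (norm_nonneg z) hz
        (pow_le_one₀ (norm_nonneg p) hp.le)
    rw [pow_succ, ← mul_assoc, mul_comm _ p, qExp_mul_left hp norm_lt, ih, qPochhammer_succ]
    ring

theorem multipliable_one_sub_mul_pow (hp : ‖p‖ < 1) (z : 𝕜) :
    Multipliable fun n : ℕ ↦ 1 - z * p ^ n := by
  have summable_norm : Summable fun n : ℕ ↦ ‖-(z * p ^ n)‖ := by
    simpa only [norm_neg, norm_mul, norm_pow] using
      (summable_geometric_of_lt_one (norm_nonneg p) hp).mul_left ‖z‖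
  simpa only [sub_eq_add_neg] using multipliable_one_add_of_summable summable_norm

theorem tprod_one_sub_mul_pow_mul_qExp (hp : ‖p‖ < 1) (hz : ‖z‖ < 1) :
    (∏' n : ℕ, (1 - z * p ^ n)) * qExp p z = 1 := by
  have arg_tendsto : Tendsto (fun n : ℕ ↦ z * p ^ n) atTop (𝓝 0) := by
    simpa using (tendsto_pow_atTop_nhds_zero_of_norm_lt_one hp).const_mul z
  have qExp_tendsto : Tendsto (fun n : ℕ ↦ qExp p (z * p ^ n)) atTop (𝓝 1) := by
    simpa only [Function.comp_def, qExp_zero_right] using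
      (continuousAt_qExp hp (norm_zero.trans_lt one_pos)).tendsto.comp arg_tendsto
  have qPochhammer_tendsto :
      Tendsto (qPochhammer z p) atTop (𝓝 (∏' n : ℕ, (1 - z * p ^ n))) :=
    (multipliable_one_sub_mul_pow hp z).hasProd.tendsto_prod_nat
  simp only [qExp_mul_pow hp hz] at qExp_tendsto
  exact tendsto_nhds_unique (qPochhammer_tendsto.mul_const _) qExp_tendsto

theorem hasProd_inv_one_sub_mul_pow (hp : ‖p‖ < 1) (hz : ‖z‖ < 1) :
    HasProd (fun n : ℕ ↦ (1 - z * p ^ n)⁻¹) (qExp p z) := by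
  have tprod_mul_qExp := tprod_one_sub_mul_pow_mul_qExp hp hz
  rw [← inv_eq_of_mul_eq_one_right tprod_mul_qExp]
  exact (multipliable_one_sub_mul_pow hp z).hasProd.inv₀ (left_ne_zero_of_mul_eq_one tprod_mul_qExp)

theorem stmt_0_general {q u : 𝕜} (hq : 1 < ‖q‖) (hu : ‖u‖ < ‖q‖) :
    Summable (fun n : ℕ => u ^ n * q ^ n.choose 2 / ∏ k ∈ range n, (q ^ (k + 1) - 1)) ∧
    HasProd (fun r : ℕ => (1 - u * (q ^ (r + 1))⁻¹)⁻¹)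
      (∑' n : ℕ, u ^ n * q ^ n.choose 2 / ∏ k ∈ range n, (q ^ (k + 1) - 1)) := by
  have norm_q_pos : 0 < ‖q‖ := one_pos.trans hq
  have hp : ‖q⁻¹‖ < 1 := norm_inv q ▸ inv_lt_one_of_one_lt₀ hq
  have hz : ‖u / q‖ < 1 := norm_div u q ▸ (div_lt_one norm_q_pos).2 hu
  have factor (r : ℕ) : u * (q ^ (r + 1))⁻¹ = u / q * q⁻¹ ^ r := by
    rw [pow_succ', mul_inv, ← mul_assoc, ← div_eq_mul_inv u, inv_pow]
  simp only [pow_mul_pow_choose_two_div_prod_pow_sub_one (norm_pos_iff.1 norm_q_pos), factor]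
  exact ⟨summable_pow_div_qPochhammer_self hp hz, hasProd_inv_one_sub_mul_pow hp hz⟩

end NormedField

/-- Stong's lemma, part 1: for real `q > 1` and `0 < u < 1`,
`∏_{r=1}^∞ 1/(1 − u q^{−r})` converges and equals
`∑_{n=0}^∞ uⁿ q^{C(n,2)} / ((qⁿ−1)⋯(q−1))`. -/
theorem stmt_0 (q u : ℝ) (hq : 1 < q) (hu0 : 0 < u) (hu1 : u < 1) :
    Summable (fun n : ℕ => u ^ n * q ^ n.choose 2 /
      ∏ k ∈ Finset.range n, (q ^ (k + 1) - 1)) ∧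
    HasProd (fun r : ℕ => (1 - u * (q ^ (r + 1))⁻¹)⁻¹)
      (∑' n : ℕ, u ^ n * q ^ n.choose 2 /
        ∏ k ∈ Finset.range n, (q ^ (k + 1) - 1)) :=
  stmt_0_general (hq.trans_le (le_abs_self q)) <| by
    simpa only [Real.norm_eq_abs, abs_of_pos hu0] using (hu1.trans hq).trans_le (le_abs_self q)
end

section
/- Let q be a real number with q > 1 and let u be a real number with 0 < u < 1. Then the infinite product ∏_{r=1}^∞ (1 − u·q^{−r}) converges and equals the convergent series ∑_{n=0}^∞ (−u)^n / ((q^n − 1)(q^{n−1} − 1)⋯(q − 1)), where the n = 0 term is 1. -/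
/-!
Write `E x = ∑ xⁿ / ((q - 1) ⋯ (qⁿ - 1))`. Comparing coefficients gives `E (q * y) = (1 + y) * E y`,
so `E x = (∏_{r ≤ N} (1 + x / q ^ r)) * E (x / q ^ N)` for every `N`. As `N → ∞` the argument of the
last factor tends to `0`, where `E` is continuous with value `1`.
-/

open Filter Finset Topology

section Algebra

variable {K : Type*} [Field K]

/-- The `n`-th term `xⁿ / ((q - 1) ⋯ (qⁿ - 1))` of Euler's `q`-exponential series, whose sum is the
infinite product of the factors `1 + x / q ^ r`, `1 ≤ r`. -/
def eulerTerm (q x : K) (n : ℕ) : K :=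
  x ^ n / ∏ k ∈ range n, (q ^ (k + 1) - 1)

@[simp]
lemma eulerTerm_zero (q x : K) : eulerTerm q x 0 = 1 := by
  simp [eulerTerm]

lemma eulerTerm_succ (q x : K) (n : ℕ) :
    eulerTerm q x (n + 1) = x / (q ^ (n + 1) - 1) * eulerTerm q x n := by
  rw [eulerTerm, eulerTerm, prod_range_succ, pow_succ', mul_comm (∏ _ ∈ _, _), mul_div_mul_comm]

lemma eulerTerm_eq_pow_mul (q x : K) (n : ℕ) : eulerTerm q x n = x ^ n * eulerTerm q 1 n := by
  rw [eulerTerm, eulerTerm, one_pow, mul_one_div]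

lemma eulerTerm_mul_succ {q : K} {n : ℕ} (hq : q ^ (n + 1) ≠ 1) (y : K) :
    eulerTerm q (q * y) (n + 1) = eulerTerm q y (n + 1) + y * eulerTerm q y n := by
  have hq' : q ^ (n + 1) - 1 ≠ 0 := sub_ne_zero.2 hq
  rw [eulerTerm_eq_pow_mul q (q * y), eulerTerm_eq_pow_mul q y, eulerTerm_eq_pow_mul q y n,
    eulerTerm_succ]
  field_simp
  ring

end Algebra

section NormedField

variable {𝕜 : Type*} [NormedField 𝕜] {q : 𝕜}

lemma pow_succ_ne_one_of_one_lt_norm (hq : 1 < ‖q‖) (n : ℕ) : q ^ (n + 1) ≠ 1 := fun h =>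
  (one_lt_pow₀ hq n.succ_ne_zero).ne' (by rw [← norm_pow, h, norm_one])

lemma tendsto_const_div_pow_succ_sub_one (hq : 1 < ‖q‖) (x : 𝕜) :
    Tendsto (fun n : ℕ => x / (q ^ (n + 1) - 1)) atTop (𝓝 0) := by
  have hpow : Tendsto (fun n : ℕ => ‖q ^ (n + 1)‖) atTop atTop := by
    simpa only [norm_pow, Function.comp_def] using
      (tendsto_pow_atTop_atTop_of_one_lt hq).comp (tendsto_add_atTop_nat 1)
  have hsub : Tendsto (fun n : ℕ => q ^ (n + 1) - 1) atTop (Bornology.cobounded 𝕜) :=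
    (tendsto_sub_const_cobounded 1).comp (tendsto_norm_atTop_iff_cobounded.1 hpow)
  simpa only [div_eq_mul_inv, mul_zero, Function.comp_def] using
    (tendsto_inv₀_cobounded.comp hsub).const_mul x

lemma tendsto_const_mul_inv_pow (hq : 1 < ‖q‖) (x : 𝕜) :
    Tendsto (fun n : ℕ => x * (q ^ n)⁻¹) atTop (𝓝 0) := by
  have hinv : ‖q⁻¹‖ < 1 := by simpa only [norm_inv] using inv_lt_one_of_one_lt₀ hq
  simpa only [inv_pow, mul_zero] using (tendsto_pow_atTop_nhds_zero_of_norm_lt_one hinv).const_mul x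

lemma summable_norm_eulerTerm (hq : 1 < ‖q‖) (x : 𝕜) : Summable fun n => ‖eulerTerm q x n‖ := by
  have hratio : ∀ᶠ n : ℕ in atTop, ‖x / (q ^ (n + 1) - 1)‖ < 1 / 2 :=
    (tendsto_const_div_pow_succ_sub_one hq x).norm.eventually_lt_const (by norm_num)
  refine summable_of_ratio_norm_eventually_le (r := 1 / 2) (by norm_num) ?_
  filter_upwards [hratio] with n hn
  rw [norm_norm, norm_norm, eulerTerm_succ, norm_mul]
  gcongr

variable [CompleteSpace 𝕜]

lemma summable_eulerTerm (hq : 1 < ‖q‖) (x : 𝕜) : Summable (eulerTerm q x) :=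
  (summable_norm_eulerTerm hq x).of_norm

lemma tsum_eulerTerm_mul (hq : 1 < ‖q‖) (y : 𝕜) :
    ∑' n, eulerTerm q (q * y) n = (1 + y) * ∑' n, eulerTerm q y n := by
  have hy : Summable (eulerTerm q y) := summable_eulerTerm hq y
  have hy_tail : Summable fun n => eulerTerm q y (n + 1) := (summable_nat_add_iff 1).2 hy
  calc ∑' n, eulerTerm q (q * y) n
      = 1 + ∑' n, (eulerTerm q y (n + 1) + y * eulerTerm q y n) := by
        rw [(summable_eulerTerm hq _).tsum_eq_zero_add, eulerTerm_zero]
        simp only [eulerTerm_mul_succ (pow_succ_ne_one_of_one_lt_norm hq _)]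
    _ = (1 + ∑' n, eulerTerm q y (n + 1)) + y * ∑' n, eulerTerm q y n := by
        rw [hy_tail.tsum_add (hy.mul_left y), tsum_mul_left, add_assoc]
    _ = (1 + y) * ∑' n, eulerTerm q y n := by
        rw [← eulerTerm_zero q y, ← hy.tsum_eq_zero_add, eulerTerm_zero, add_mul,
          one_mul]

lemma tsum_eulerTerm_eq_prod_mul (hq : 1 < ‖q‖) (x : 𝕜) (N : ℕ) :
    ∑' n, eulerTerm q x n =
      (∏ r ∈ range N, (1 + x * (q ^ (r + 1))⁻¹)) * ∑' n, eulerTerm q (x * (q ^ N)⁻¹) n := by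
  have hq0 : q ≠ 0 := norm_pos_iff.1 (one_pos.trans hq)
  induction N with
  | zero => simp
  | succ N ih =>
    have hstep : x * (q ^ N)⁻¹ = q * (x * (q ^ (N + 1))⁻¹) := by
      rw [pow_succ, mul_inv, mul_left_comm, mul_left_comm q, mul_inv_cancel₀ hq0, mul_one]
    rw [ih, hstep, tsum_eulerTerm_mul hq, prod_range_succ, mul_assoc]

lemma tendsto_tsum_eulerTerm_nhds_zero (hq : 1 < ‖q‖) :
    Tendsto (fun x => ∑' n, eulerTerm q x n) (𝓝 0) (𝓝 1) := by
  have hzero : ∑' n, eulerTerm q 0 n = 1 := by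
    rw [tsum_eq_single 0 fun n hn => by simp [eulerTerm, hn], eulerTerm_zero]
  rw [← hzero]
  refine tendsto_tsum_of_dominated_convergence (summable_norm_eulerTerm hq 1)
    (fun n => ((continuous_pow n).tendsto 0).div_const _) ?_
  filter_upwards [Metric.closedBall_mem_nhds (0 : 𝕜) one_pos] with x hx n
  rw [eulerTerm_eq_pow_mul, norm_mul, norm_pow]
  exact mul_le_of_le_one_left (norm_nonneg _)
    (pow_le_one₀ (norm_nonneg _) (mem_closedBall_zero_iff.1 hx))

lemma multipliable_one_add_mul_inv_pow (hq : 1 < ‖q‖) (x : 𝕜) :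
    Multipliable fun r : ℕ => 1 + x * (q ^ (r + 1))⁻¹ := by
  have hinv : ‖q‖⁻¹ < 1 := inv_lt_one_of_one_lt₀ hq
  have hgeom : Summable fun r : ℕ => ‖x‖ * ‖q‖⁻¹ ^ (r + 1) :=
    ((summable_nat_add_iff 1).2 (summable_geometric_of_lt_one (by positivity) hinv)).mul_left _
  refine multipliable_one_add_of_summable ?_
  simpa only [norm_mul, norm_inv, norm_pow, inv_pow] using hgeom

theorem stmt_1_general (hq : 1 < ‖q‖) (x : 𝕜) :
    Summable (fun n : ℕ => x ^ n / ∏ k ∈ range n, (q ^ (k + 1) - 1)) ∧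
    HasProd (fun r : ℕ => 1 + x * (q ^ (r + 1))⁻¹)
      (∑' n : ℕ, x ^ n / ∏ k ∈ range n, (q ^ (k + 1) - 1)) := by
  refine ⟨summable_eulerTerm hq x, ?_⟩
  have hmul := multipliable_one_add_mul_inv_pow hq x
  have hlim : Tendsto (fun N : ℕ => ∑' n, eulerTerm q (x * (q ^ N)⁻¹) n) atTop (𝓝 1) :=
    (tendsto_tsum_eulerTerm_nhds_zero hq).comp (tendsto_const_mul_inv_pow hq x)
  have hprod := hmul.hasProd.tendsto_prod_nat.mul hlim
  simp only [← tsum_eulerTerm_eq_prod_mul hq x, mul_one] at hprod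
  have heq : ∑' n, eulerTerm q x n = ∏' r : ℕ, (1 + x * (q ^ (r + 1))⁻¹) :=
    tendsto_nhds_unique tendsto_const_nhds hprod
  exact heq ▸ hmul.hasProd

end NormedField

/-- Stong's lemma, part 2: for real `q > 1` and `0 < u < 1`,
`∏_{r=1}^∞ (1 − u q^{−r})` converges and equals
`∑_{n=0}^∞ (−u)ⁿ / ((qⁿ−1)⋯(q−1))`. -/
theorem stmt_1 (q u : ℝ) (hq : 1 < q) (hu0 : 0 < u) (hu1 : u < 1) :
    Summable (fun n : ℕ => (-u) ^ n /
      ∏ k ∈ Finset.range n, (q ^ (k + 1) - 1)) ∧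
    HasProd (fun r : ℕ => 1 - u * (q ^ (r + 1))⁻¹)
      (∑' n : ℕ, (-u) ^ n /
        ∏ k ∈ Finset.range n, (q ^ (k + 1) - 1)) := by
  simpa only [neg_mul, ← sub_eq_add_neg] using
    stmt_1_general (hq.trans_le (Real.le_norm_self q)) (-u)
end

section
/- For every positive integer n, ∑_{λ ⊢ n} ( n! / ∏_{s∈λ} h(s) )² = n!, where the sum is over all partitions λ of n. -/
open Nat

/-- The hook length of the cell `s = (i,j)` of a Young diagram (0-indexed cells). -/
def hookLen (μ : YoungDiagram) (s : ℕ × ℕ) : ℕ :=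
  (μ.rowLen s.1 - s.2 - 1) + (μ.colLen s.2 - s.1 - 1) + 1

/-!
Write `F μ` for the reciprocal of the product of the hook lengths of `μ`. In each row, the hook
lengths and the differences of the shifted parts `a i = μ i + (k - 1 - i)` together fill
`1, ..., a i`, so `F μ = ∏_{p < q} (a p - a q) / ∏ (a i)!`. Adding or removing a cell in row `i`
changes `a i` by one; if the result is not a diagram, two shifted parts coincide and the quotient
vanishes. Hence the sum of `F` over the diagrams obtained from a given one by adding or removing a
cell runs over all rows, and Lagrange interpolation at the nodes `a i` evaluates it:
`∑_{μ ⊃ ν} F μ = F ν` for `ν` of size `n` and `∑_{ν ⊂ μ} F ν = (n + 1) F μ` for `μ` of size `n + 1`.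
Summing `F ν * F μ` over all pairs `ν ⊂ μ` in both orders gives
`(n + 1) ∑_{μ ⊢ n + 1} (F μ)² = ∑_{ν ⊢ n} (F ν)²`, and so `∑_{μ ⊢ n} (F μ)² = 1 / n!`.
-/

namespace HookLength

open Finset Function Polynomial

section Vandermonde

variable {ι R : Type*} [LinearOrder ι] [CommRing R]

/-- The Vandermonde product of the family `a` over `s`, one factor `a p - a q` for each pair
`p < q` in `s`. With this orientation it is positive for strictly decreasing families. -/
def vandermondeProd (s : Finset ι) (a : ι → R) : R :=
  ∏ q ∈ s, ∏ p ∈ s with p < q, (a p - a q)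

lemma vandermondeProd_insert {s : Finset ι} {i : ι} (hi : i ∉ s) (a : ι → R) :
    vandermondeProd (insert i s) a =
      (-1) ^ #{j ∈ s | j < i} * vandermondeProd s a * ∏ j ∈ s, (a i - a j) := by
  have prod_below : ∏ j ∈ s with j < i, (a j - a i) =
      (-1) ^ #{j ∈ s | j < i} * ∏ j ∈ s with j < i, (a i - a j) := by
    rw [← prod_const, ← prod_mul_distrib]
    exact prod_congr rfl fun j _ => by ring
  have prod_above : ∏ q ∈ s, ∏ p ∈ insert i s with p < q, (a p - a q) =
      (∏ q ∈ s with ¬q < i, (a i - a q)) * vandermondeProd s a := by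
    rw [prod_filter, vandermondeProd, ← prod_mul_distrib]
    refine prod_congr rfl fun q hq => ?_
    have hqi : q ≠ i := ne_of_mem_of_not_mem hq hi
    rcases hqi.lt_or_gt with h | h
    · simp [filter_insert, h, h.not_gt]
    · simp [filter_insert, h, h.not_gt, hi]
  rw [vandermondeProd, prod_insert hi, filter_insert, if_neg (lt_irrefl i), prod_below, prod_above,
    ← prod_filter_mul_prod_filter_not s (· < i) fun j => a i - a j]
  ring

lemma vandermondeProd_update_of_notMem {s : Finset ι} {i : ι} (hi : i ∉ s) (a : ι → R) (x : R) :
    vandermondeProd s (update a i x) = vandermondeProd s a := by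
  refine prod_congr rfl fun q hq => prod_congr rfl fun p hp => ?_
  rw [update_of_ne (ne_of_mem_of_not_mem hq hi),
    update_of_ne (ne_of_mem_of_not_mem (mem_filter.1 hp).1 hi)]

lemma vandermondeProd_update_mul {s : Finset ι} {i : ι} (hi : i ∈ s) (a : ι → R) (x : R) :
    vandermondeProd s (update a i x) * ∏ j ∈ s.erase i, (a i - a j) =
      vandermondeProd s a * ∏ j ∈ s.erase i, (x - a j) := by
  have hprod : ∏ j ∈ s.erase i, (update a i x i - update a i x j) =
      ∏ j ∈ s.erase i, (x - a j) :=
    prod_congr rfl fun j hj => by rw [update_self, update_of_ne (ne_of_mem_erase hj)]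
  rw [← insert_erase hi, vandermondeProd_insert (notMem_erase i s),
    vandermondeProd_insert (notMem_erase i s), vandermondeProd_update_of_notMem (notMem_erase i s),
    insert_erase hi, hprod]
  ring

lemma vandermondeProd_eq_zero {s : Finset ι} {p q : ι} (hp : p ∈ s) (hq : q ∈ s) (hpq : p < q)
    {a : ι → R} (ha : a p = a q) : vandermondeProd s a = 0 :=
  prod_eq_zero hq <| prod_eq_zero (mem_filter.2 ⟨hp, hpq⟩) (sub_eq_zero.2 ha)

end Vandermonde

section Lagrange

open Lagrange (nodal nodal_monic nodal_insert_eq_nodal eval_nodal)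

variable {ι R K : Type*} [CommRing R] [Field K]

lemma sum_prod_add_sub_div_eq_one [DecidableEq ι] {s : Finset ι} {a : ι → K}
    (ha : Set.InjOn a s) {m : ι} (hm : m ∈ s) (c : K) :
    ∑ i ∈ s, (∏ j ∈ s.erase m, (a i + c - a j)) / ∏ j ∈ s.erase i, (a i - a j) = 1 := by
  have hdeg : (#s : WithBot ℕ) = (nodal (s.erase m) fun j => a j - c).degree + 1 := by
    rw [Lagrange.degree_nodal, ← card_erase_add_one hm]
    rfl
  rw [← nodal_monic.leadingCoeff, Lagrange.leadingCoeff_eq_sum ha hdeg]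
  simp only [eval_nodal, sub_sub_eq_add_sub]

/-- With `P = ∏ (X - a j)` and `k = #s`, the polynomial `X (P(X) - P(X - 1)) - k P(X)`. Its value at
the node `a i` is `a i * ∏_{j ≠ i} (a i - 1 - a j)`, and the leading terms of its two summands
cancel. -/
noncomputable def shiftDefect (s : Finset ι) (a : ι → R) : R[X] :=
  X * (nodal s a - nodal s fun j => a j + 1) - C (#s : R) * nodal s a

lemma shiftDefect_insert [DecidableEq ι] {s : Finset ι} {i : ι} (hi : i ∉ s) (a : ι → R) :
    shiftDefect (insert i s) a =
      (X - C (a i + 1)) * shiftDefect s a + C (a i - #s) * nodal s a := by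
  simp only [shiftDefect, nodal_insert_eq_nodal hi, card_insert_of_notMem hi, Nat.cast_add,
    Nat.cast_one, map_add, map_sub, map_one]
  ring

lemma degree_shiftDefect_lt (s : Finset ι) (a : ι → R) :
    (shiftDefect s a).degree < #s := by
  classical
  nontriviality R
  induction s using Finset.induction_on with
  | empty => simp [shiftDefect]
  | insert i s hi ih =>
    rw [shiftDefect_insert hi, card_insert_of_notMem hi]
    refine (degree_add_le _ _).trans_lt (max_lt ?_ ?_)
    · refine (degree_mul_le _ _).trans_lt ?_
      rw [degree_X_sub_C, add_comm, Nat.cast_add]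
      exact WithBot.add_lt_add_right WithBot.one_ne_bot ih
    · rw [← smul_eq_C_mul]
      refine (degree_smul_le _ _).trans_lt ?_
      rw [Lagrange.degree_nodal]
      exact_mod_cast Nat.lt_succ_self #s

lemma coeff_shiftDefect (s : Finset ι) (a : ι → R) :
    (shiftDefect s a).coeff (#s - 1) = ∑ j ∈ s, a j - ∑ j ∈ range #s, (j : R) := by
  classical
  nontriviality R
  induction s using Finset.induction_on with
  | empty => simp [shiftDefect]
  | insert i s hi ih =>
    have hcoeff : (shiftDefect s a).coeff #s = 0 :=
      coeff_eq_zero_of_degree_lt (degree_shiftDefect_lt s a)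
    have hnodal : (nodal s a).coeff #s = 1 := by
      rw [← Lagrange.natDegree_nodal (s := s) (v := a)]
      exact nodal_monic.coeff_natDegree
    have hX : (X * shiftDefect s a).coeff #s = (shiftDefect s a).coeff (#s - 1) := by
      rcases s.eq_empty_or_nonempty with rfl | hs
      · simp [shiftDefect]
      · rw [← coeff_X_mul (shiftDefect s a), Nat.sub_add_cancel hs.card_pos]
    rw [shiftDefect_insert hi, card_insert_of_notMem hi, Nat.add_sub_cancel, sum_insert hi,
      sum_range_succ, sub_mul, coeff_add, coeff_sub, coeff_C_mul, coeff_C_mul, hX, ih, hcoeff,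
      hnodal]
    ring

lemma eval_shiftDefect [DecidableEq ι] {s : Finset ι} {i : ι} (hi : i ∈ s) (a : ι → R) :
    (shiftDefect s a).eval (a i) = a i * ∏ j ∈ s.erase i, (a i - 1 - a j) := by
  have hshift : ∏ j ∈ s, (a i - (a j + 1)) = -∏ j ∈ s.erase i, (a i - 1 - a j) := by
    rw [← mul_prod_erase s _ hi, sub_add_cancel_left, neg_one_mul]
    simp only [sub_add_eq_sub_sub_swap]
  simp [shiftDefect, eval_nodal, hshift, Lagrange.eval_nodal_at_node hi, -map_natCast]

lemma sum_mul_prod_sub_one_sub_div [DecidableEq ι] {s : Finset ι} {a : ι → K}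
    (ha : Set.InjOn a s) :
    ∑ i ∈ s, a i * (∏ j ∈ s.erase i, (a i - 1 - a j)) / ∏ j ∈ s.erase i, (a i - a j) =
      ∑ j ∈ s, a j - ∑ j ∈ range #s, (j : K) := by
  rw [← coeff_shiftDefect, Lagrange.coeff_eq_sum ha (degree_shiftDefect_lt s a)]
  exact sum_congr rfl fun i hi => by rw [eval_shiftDefect hi]

end Lagrange

section FrobeniusQuotient

variable {ι : Type*} [LinearOrder ι] {s : Finset ι} {a : ι → ℕ}

/-- The quotient `∏_{p < q} (a p - a q) / ∏_i (a i)!` over the indices in `s`. By Frobenius, it is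
the reciprocal of the product of the hook lengths when `a` lists the shifted parts of a
partition. -/
noncomputable def frobeniusQuotient (s : Finset ι) (a : ι → ℕ) : ℝ :=
  vandermondeProd s (fun i => (a i : ℝ)) / ∏ i ∈ s, ((a i)! : ℝ)

lemma prod_factorial_update {i : ι} (hi : i ∈ s) (a : ι → ℕ) (x : ℕ) :
    (∏ j ∈ s, (update a i x j)!) * (a i)! = x ! * ∏ j ∈ s, (a j)! := by
  have hprod : ∏ j ∈ s.erase i, (update a i x j)! = ∏ j ∈ s.erase i, (a j)! :=
    prod_congr rfl fun j hj => by rw [update_of_ne (ne_of_mem_erase hj)]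
  rw [← mul_prod_erase s _ hi, ← mul_prod_erase s (fun j => (a j)!) hi, hprod, update_self]
  ring

lemma frobeniusQuotient_update (ha : Set.InjOn a s) {i : ι} (hi : i ∈ s) (x : ℕ) :
    frobeniusQuotient s (update a i x) = frobeniusQuotient s a *
      ((a i)! / x ! * (∏ j ∈ s.erase i, ((x : ℝ) - a j)) / ∏ j ∈ s.erase i, ((a i : ℝ) - a j)) := by
  have hvandermonde := vandermondeProd_update_mul hi (fun j => (a j : ℝ)) x
  have hfactorial : (∏ j ∈ s, ((update a i x j)! : ℝ)) * (a i)! = x ! * ∏ j ∈ s, ((a j)! : ℝ) :=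
    mod_cast prod_factorial_update hi a x
  have hcast : (fun j => (update a i x j : ℝ)) = update (fun j => (a j : ℝ)) i x :=
    funext fun j => apply_update (fun _ (m : ℕ) => (m : ℝ)) a i x j
  have hdiff : ∏ j ∈ s.erase i, ((a i : ℝ) - a j) ≠ 0 := prod_ne_zero_iff.2 fun j hj =>
    sub_ne_zero.2 <| Nat.cast_injective.ne <|
      ha.ne hi (mem_of_mem_erase hj) (ne_of_mem_erase hj).symm
  have hai : ((a i)! : ℝ) ≠ 0 := by positivity
  rw [frobeniusQuotient, frobeniusQuotient, hcast, eq_div_of_mul_eq hdiff hvandermonde,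
    eq_div_of_mul_eq hai hfactorial]
  field_simp

lemma frobeniusQuotient_eq_zero {p q : ι} (hp : p ∈ s) (hq : q ∈ s) (hpq : p < q)
    (h : a p = a q) : frobeniusQuotient s a = 0 := by
  rw [frobeniusQuotient, vandermondeProd_eq_zero hp hq hpq (congrArg Nat.cast h), zero_div]

lemma sum_frobeniusQuotient_update_add_one (ha : Set.InjOn a s) {m : ι} (hm : m ∈ s)
    (h0 : a m = 0) :
    ∑ i ∈ s, frobeniusQuotient s (update a i (a i + 1)) = frobeniusQuotient s a := by
  have hcast : Set.InjOn (fun i => (a i : ℝ)) s := Nat.cast_injective.comp_injOn ha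
  have hterm : ∀ i ∈ s, frobeniusQuotient s (update a i (a i + 1)) = frobeniusQuotient s a *
      ((∏ j ∈ s.erase m, ((a i : ℝ) + 1 - a j)) / ∏ j ∈ s.erase i, ((a i : ℝ) - a j)) := by
    intro i hi
    have hprod : ∏ j ∈ s.erase i, ((a i : ℝ) + 1 - a j) =
        (a i + 1) * ∏ j ∈ s.erase m, ((a i : ℝ) + 1 - a j) := by
      trans ∏ j ∈ s, ((a i : ℝ) + 1 - a j)
      · rw [← mul_prod_erase s _ hi, add_sub_cancel_left, one_mul]
      · rw [← mul_prod_erase s _ hm, h0, Nat.cast_zero, sub_zero]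
    have hne : (a i : ℝ) + 1 ≠ 0 := by positivity
    rw [frobeniusQuotient_update ha hi, Nat.factorial_succ]
    push_cast
    rw [hprod]
    field_simp
  rw [sum_congr rfl hterm, ← mul_sum, sum_prod_add_sub_div_eq_one hcast hm, mul_one]

lemma sum_frobeniusQuotient_update_sub_one (ha : Set.InjOn a s) :
    ∑ i ∈ s with 0 < a i, frobeniusQuotient s (update a i (a i - 1)) =
      (∑ j ∈ s, (a j : ℝ) - ∑ j ∈ range #s, (j : ℝ)) * frobeniusQuotient s a := by
  have hcast : Set.InjOn (fun i => (a i : ℝ)) s := Nat.cast_injective.comp_injOn ha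
  have hterm : ∀ i ∈ s, (if 0 < a i then frobeniusQuotient s (update a i (a i - 1)) else 0) =
      (a i * (∏ j ∈ s.erase i, ((a i : ℝ) - 1 - a j)) / ∏ j ∈ s.erase i, ((a i : ℝ) - a j)) *
        frobeniusQuotient s a := by
    intro i hi
    split_ifs with hpos
    · have hfactorial : ((a i)! : ℝ) = a i * (a i - 1)! :=
        mod_cast (Nat.mul_factorial_pred hpos.ne').symm
      rw [frobeniusQuotient_update ha hi, hfactorial, Nat.cast_pred hpos]
      field_simp
    · simp [Nat.eq_zero_of_not_pos hpos]
  rw [sum_filter, sum_congr rfl hterm, ← sum_mul, sum_mul_prod_sub_one_sub_div hcast]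

end FrobeniusQuotient

section RowLen

variable {μ ν : YoungDiagram} {k : ℕ}

lemma lt_rowLen_iff_lt_colLen {i j : ℕ} : j < μ.rowLen i ↔ i < μ.colLen j := by
  rw [← YoungDiagram.mem_iff_lt_rowLen, YoungDiagram.mem_iff_lt_colLen]

lemma le_iff_rowLen_le : ν ≤ μ ↔ ν.rowLen ≤ μ.rowLen := by
  simp only [SetLike.le_def, Prod.forall, YoungDiagram.mem_iff_lt_rowLen, Pi.le_def,
    ← forall_lt_iff_le]

lemma rowLen_injective : Injective YoungDiagram.rowLen := fun _ _ h =>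
  le_antisymm (le_iff_rowLen_le.2 h.le) (le_iff_rowLen_le.2 h.ge)

lemma rowLen_antitone (μ : YoungDiagram) : Antitone μ.rowLen := fun i j => μ.rowLen_anti i j

lemma rowLen_eq_zero (hk : μ.colLen 0 ≤ k) {i : ℕ} (hi : k ≤ i) : μ.rowLen i = 0 :=
  Nat.eq_zero_of_not_pos fun h => (hk.trans hi).not_gt (lt_rowLen_iff_lt_colLen.1 h)

lemma rowLen_le_card (μ : YoungDiagram) (i : ℕ) : μ.rowLen i ≤ μ.card := by
  rw [YoungDiagram.rowLen_eq_card]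
  exact card_le_card (filter_subset _ _)

lemma colLen_le_card (μ : YoungDiagram) (j : ℕ) : μ.colLen j ≤ μ.card := by
  rw [YoungDiagram.colLen_eq_card]
  exact card_le_card (filter_subset _ _)

lemma mem_cells_iff (hk : μ.colLen 0 ≤ k) (c : ℕ × ℕ) :
    c ∈ μ.cells ↔ c.1 ∈ range k ∧ c.2 ∈ range (μ.rowLen c.1) := by
  rw [YoungDiagram.mem_cells, YoungDiagram.mem_iff_lt_rowLen, mem_range, mem_range, iff_and_self]
  intro h
  by_contra! hle
  exact h.ne_bot (rowLen_eq_zero hk hle)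

lemma card_eq_sum_rowLen (hk : μ.colLen 0 ≤ k) : μ.card = ∑ i ∈ range k, μ.rowLen i := by
  rw [YoungDiagram.card, card_eq_sum_ones,
    sum_finset_product _ _ (fun i => range (μ.rowLen i)) (mem_cells_iff hk)]
  simp

lemma exists_rowLen_eq {f : ℕ → ℕ} (hf : Antitone f) (h0 : ∀ i, k ≤ i → f i = 0) :
    ∃ μ : YoungDiagram, μ.rowLen = f := by
  let cells : Finset (ℕ × ℕ) := {c ∈ range k ×ˢ range (f 0) | c.2 < f c.1}
  have mem_cells (i j : ℕ) : (i, j) ∈ cells ↔ j < f i := by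
    simp only [cells, mem_filter, mem_product, mem_range, and_iff_right_iff_imp]
    intro hj
    refine ⟨?_, hj.trans_le (hf i.zero_le)⟩
    by_contra! hle
    exact hj.ne_bot (h0 i hle)
  have hlower : IsLowerSet (cells : Set (ℕ × ℕ)) := by
    rintro ⟨i, j⟩ ⟨i', j'⟩ ⟨hi, hj⟩ hmem
    simp only [mem_coe, mem_cells] at hmem ⊢
    exact hj.trans_lt (hmem.trans_le (hf hi))
  refine ⟨⟨cells, hlower⟩, funext fun i => eq_of_forall_lt_iff fun j => ?_⟩
  rw [← YoungDiagram.mem_iff_lt_rowLen, YoungDiagram.mem_mk, mem_cells]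

lemma rowLen_eq_update_of_cells_eq_insert {c : ℕ × ℕ} (hc : c ∉ ν.cells)
    (h : insert c ν.cells = μ.cells) :
    μ.rowLen = update ν.rowLen c.1 (ν.rowLen c.1 + 1) := by
  ext i
  rw [update_apply, YoungDiagram.rowLen_eq_card, YoungDiagram.row, ← h, filter_insert]
  split_ifs with hci hic hic
  · rw [card_insert_of_notMem (by simp [hc]), ← hci, YoungDiagram.rowLen_eq_card, YoungDiagram.row]
  · exact absurd hci.symm hic
  · exact absurd hic.symm hci
  · rw [YoungDiagram.rowLen_eq_card, YoungDiagram.row]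

lemma le_iff_exists_rowLen_eq_update (hcard : μ.card = ν.card + 1) (hk : μ.colLen 0 ≤ k) :
    ν ≤ μ ↔ ∃ i ∈ range k, μ.rowLen = update ν.rowLen i (ν.rowLen i + 1) := by
  constructor
  · intro hle
    obtain ⟨c, hc, hcells⟩ := exists_eq_insert_iff.2
      ⟨YoungDiagram.cells_subset_iff.2 hle, hcard.symm⟩
    have hmem : c ∈ μ.cells := hcells ▸ mem_insert_self c ν.cells
    exact ⟨c.1, ((mem_cells_iff hk c).1 hmem).1, rowLen_eq_update_of_cells_eq_insert hc hcells⟩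
  · rintro ⟨i, -, hi⟩
    rw [le_iff_rowLen_le, hi]
    exact le_update_self_iff.2 (Nat.le_succ _)

end RowLen

section Frobenius

variable {μ : YoungDiagram} {k : ℕ}

/-- The shifted parts `f i + (k - 1 - i)` of a sequence `f`, meant for the indices `i < k`: they are
strictly decreasing exactly when `f` is weakly decreasing. -/
def shiftedPart (k : ℕ) (f : ℕ → ℕ) (i : ℕ) : ℕ := f i + (k - 1 - i)

lemma shiftedPart_update (f : ℕ → ℕ) (i x : ℕ) :
    shiftedPart k (update f i x) = update (shiftedPart k f) i (x + (k - 1 - i)) := by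
  ext j
  rcases eq_or_ne j i with rfl | hj
  · simp only [shiftedPart, update_self]
  · simp only [shiftedPart, update_of_ne hj]

lemma shiftedPart_strictAntiOn {f : ℕ → ℕ} (hf : Antitone f) :
    StrictAntiOn (shiftedPart k f) (range k) := by
  intro p hp q hq hpq
  have := hf hpq.le
  simp only [coe_range, Set.mem_Iio, shiftedPart] at *
  omega

lemma sum_shiftedPart (k : ℕ) (f : ℕ → ℕ) :
    ∑ i ∈ range k, shiftedPart k f i = ∑ i ∈ range k, f i + ∑ i ∈ range k, i := by
  rw [← sum_range_reflect (fun i => i) k, ← sum_add_distrib]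
  rfl

lemma hookLen_strictAntiOn (μ : YoungDiagram) (i : ℕ) :
    StrictAntiOn (fun j => hookLen μ (i, j)) (range (μ.rowLen i)) := by
  intro j hj j' hj' hlt
  have := μ.colLen_anti j j' hlt.le
  simp only [coe_range, Set.mem_Iio, hookLen] at *
  omega

lemma hookLen_le_shiftedPart (hk : μ.colLen 0 ≤ k) {i j : ℕ} (hj : j < μ.rowLen i) :
    hookLen μ (i, j) ≤ shiftedPart k μ.rowLen i := by
  have := (μ.colLen_anti 0 j j.zero_le).trans hk
  simp only [hookLen, shiftedPart]
  omega

-- If row `r` reaches column `j`, the hook is longer than the difference; otherwise it is shorter.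
lemma hookLen_ne_shiftedPart_sub {i j r : ℕ} (hj : j < μ.rowLen i) (hrk : r < k) :
    hookLen μ (i, j) ≠ shiftedPart k μ.rowLen i - shiftedPart k μ.rowLen r := by
  have := lt_rowLen_iff_lt_colLen.1 hj
  simp only [hookLen, shiftedPart]
  rcases lt_or_ge j (μ.rowLen r) with hjr | hjr
  · have := lt_rowLen_iff_lt_colLen.1 hjr
    omega
  · have := mt lt_rowLen_iff_lt_colLen.2 hjr.not_gt
    omega

lemma shiftedPart_sub_injOn (μ : YoungDiagram) (k i : ℕ) :
    Set.InjOn (fun r => shiftedPart k μ.rowLen i - shiftedPart k μ.rowLen r) (Ioo i k) := by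
  have hanti := shiftedPart_strictAntiOn (k := k) (rowLen_antitone μ)
  have hlt {r : ℕ} (hr : r ∈ Ioo i k) : shiftedPart k μ.rowLen r < shiftedPart k μ.rowLen i := by
    have ⟨hir, hrk⟩ := mem_Ioo.1 hr
    exact hanti (mem_range.2 (hir.trans hrk)) (mem_range.2 hrk) hir
  intro r hr r' hr' h
  exact hanti.injOn (mem_range.2 (mem_Ioo.1 hr).2) (mem_range.2 (mem_Ioo.1 hr').2)
    ((tsub_right_inj (hlt hr).le (hlt hr').le).1 h)

lemma disjoint_image_hookLen_image_shiftedPart_sub (μ : YoungDiagram) (k i : ℕ) :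
    Disjoint ((range (μ.rowLen i)).image fun j => hookLen μ (i, j))
      ((Ioo i k).image fun r => shiftedPart k μ.rowLen i - shiftedPart k μ.rowLen r) := by
  simp only [disjoint_left, mem_image, mem_range, mem_Ioo]
  rintro _ ⟨j, hj, rfl⟩ ⟨r, ⟨-, hrk⟩, h⟩
  exact hookLen_ne_shiftedPart_sub hj hrk h.symm

lemma image_hookLen_union_image_shiftedPart_sub (hk : μ.colLen 0 ≤ k) {i : ℕ} (hi : i < k) :
    ((range (μ.rowLen i)).image fun j => hookLen μ (i, j)) ∪
      ((Ioo i k).image fun r => shiftedPart k μ.rowLen i - shiftedPart k μ.rowLen r) =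
    Ico 1 (shiftedPart k μ.rowLen i + 1) := by
  apply eq_of_subset_of_card_le
  · simp only [union_subset_iff, image_subset_iff, mem_range, mem_Ioo, mem_Ico, Nat.lt_succ_iff]
    refine ⟨fun j hj => ⟨Nat.le_add_left _ _, hookLen_le_shiftedPart hk hj⟩, ?_⟩
    rintro r ⟨hir, hrk⟩
    exact ⟨Nat.sub_pos_of_lt (shiftedPart_strictAntiOn (rowLen_antitone μ) (mem_range.2 hi)
      (mem_range.2 hrk) hir), Nat.sub_le _ _⟩
  · rw [card_union_of_disjoint (disjoint_image_hookLen_image_shiftedPart_sub μ k i),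
      Finset.card_image_of_injOn (hookLen_strictAntiOn μ i).injOn,
      Finset.card_image_of_injOn (shiftedPart_sub_injOn μ k i), card_range, Nat.card_Ioo,
      Nat.card_Ico, shiftedPart]
    omega

lemma prod_hookLen_row_mul_prod_shiftedPart_sub (hk : μ.colLen 0 ≤ k) {i : ℕ} (hi : i < k) :
    (∏ j ∈ range (μ.rowLen i), hookLen μ (i, j)) *
      ∏ r ∈ Ioo i k, (shiftedPart k μ.rowLen i - shiftedPart k μ.rowLen r) =
    (shiftedPart k μ.rowLen i)! := by
  rw [← prod_Ico_id_eq_factorial, ← image_hookLen_union_image_shiftedPart_sub hk hi,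
    prod_union (disjoint_image_hookLen_image_shiftedPart_sub μ k i),
    prod_image (hookLen_strictAntiOn μ i).injOn, prod_image (shiftedPart_sub_injOn μ k i)]

/-- The reciprocal of the product of the hook lengths of `μ`, that is `f^μ / n!` for `f^μ` the
number of standard Young tableaux of shape `μ` and `n` the size of `μ`. -/
noncomputable def invHookProd (μ : YoungDiagram) : ℝ := (∏ s ∈ μ.cells, (hookLen μ s : ℝ))⁻¹

lemma vandermondeProd_shiftedPart_rowLen (μ : YoungDiagram) (k : ℕ) :
    vandermondeProd (range k) (fun i => (shiftedPart k μ.rowLen i : ℝ)) =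
      ∏ i ∈ range k, ∏ r ∈ Ioo i k,
        ((shiftedPart k μ.rowLen i - shiftedPart k μ.rowLen r : ℕ) : ℝ) := by
  rw [vandermondeProd, prod_comm' (t' := range k) (s' := fun i => Ioo i k)
    (by simp only [mem_filter, mem_range, mem_Ioo]; omega)]
  refine prod_congr rfl fun i hi => prod_congr rfl fun r hr => ?_
  have ⟨hir, hrk⟩ := mem_Ioo.1 hr
  rw [Nat.cast_sub
    (shiftedPart_strictAntiOn (rowLen_antitone μ) hi (mem_range.2 hrk) hir).le]

lemma invHookProd_eq_frobeniusQuotient (hk : μ.colLen 0 ≤ k) :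
    invHookProd μ = frobeniusQuotient (range k) (shiftedPart k μ.rowLen) := by
  have hook_mul_vandermonde : (∏ s ∈ μ.cells, (hookLen μ s : ℝ)) *
      vandermondeProd (range k) (fun i => (shiftedPart k μ.rowLen i : ℝ)) =
      ∏ i ∈ range k, ((shiftedPart k μ.rowLen i)! : ℝ) := by
    rw [prod_finset_product _ _ (fun i => range (μ.rowLen i)) (mem_cells_iff hk),
      vandermondeProd_shiftedPart_rowLen, ← prod_mul_distrib]
    refine prod_congr rfl fun i hi => ?_
    exact_mod_cast prod_hookLen_row_mul_prod_shiftedPart_sub hk (mem_range.1 hi)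
  have hfactorial : ∏ i ∈ range k, ((shiftedPart k μ.rowLen i)! : ℝ) ≠ 0 :=
    prod_ne_zero_iff.2 fun i _ => by positivity
  rw [invHookProd, frobeniusQuotient, ← hook_mul_vandermonde]
  rw [← hook_mul_vandermonde] at hfactorial
  exact (div_mul_cancel_right₀ (right_ne_zero_of_mul hfactorial) _).symm

end Frobenius

section Branching

variable {n k : ℕ}

lemma finite_setOf_card_eq (n : ℕ) : {μ : YoungDiagram | μ.card = n}.Finite := by
  have hcells : Set.InjOn YoungDiagram.cells
      (YoungDiagram.cells ⁻¹' ((range n ×ˢ range n).powerset : Set (Finset (ℕ × ℕ)))) :=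
    fun _ _ _ _ => YoungDiagram.ext
  refine ((finite_toSet _).preimage hcells).subset fun μ hμ => ?_
  simp only [Set.mem_preimage, mem_coe, mem_powerset]
  rintro ⟨i, j⟩ hij
  obtain rfl : μ.card = n := hμ
  rw [mem_product, mem_range, mem_range]
  exact ⟨(YoungDiagram.mem_iff_lt_colLen.1 hij).trans_le (colLen_le_card μ j),
    (YoungDiagram.mem_iff_lt_rowLen.1 hij).trans_le (rowLen_le_card μ i)⟩

/-- The Young diagrams with `n` cells, which encode the partitions of `n`. -/
noncomputable def diagrams (n : ℕ) : Finset YoungDiagram := (finite_setOf_card_eq n).toFinset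

lemma mem_diagrams {μ : YoungDiagram} : μ ∈ diagrams n ↔ μ.card = n := by simp [diagrams]

lemma diagrams_zero : diagrams 0 = {⊥} := by
  ext μ
  rw [mem_diagrams, mem_singleton, YoungDiagram.card, Finset.card_eq_zero, YoungDiagram.ext_iff,
    YoungDiagram.cells_bot]

open Classical in
lemma sum_filter_exists_eq {α β ι M : Type*} [AddCommMonoid M] (S : Finset α) {t : Finset ι}
    (g : α → β) {h : ι → β} (hinj : Set.InjOn h t) (F : α → M) :
    ∑ x ∈ S with ∃ i ∈ t, g x = h i, F x = ∑ i ∈ t, ∑ x ∈ S with g x = h i, F x := by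
  rw [← sum_biUnion]
  · congr 1
    ext x
    simp only [mem_filter, mem_biUnion]
    tauto
  · intro i hi j hj hij
    refine disjoint_filter.2 fun x _ hxi hxj => hij (hinj hi hj (hxi.symm.trans hxj))

lemma eq_update_add_one_iff {ι : Type*} [DecidableEq ι] {f g : ι → ℕ} {i : ι} :
    g = update f i (f i + 1) ↔ 0 < g i ∧ f = update g i (g i - 1) := by
  constructor
  · rintro rfl
    simp
  · rintro ⟨hpos, rfl⟩
    simp [Nat.sub_add_cancel hpos]

lemma update_add_one_injective {ι : Type*} [DecidableEq ι] (f : ι → ℕ) :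
    Injective fun i => update f i (f i + 1) := by
  intro i j h
  by_contra hij
  simpa [hij] using congrFun h i

lemma update_sub_one_injOn {ι : Type*} [DecidableEq ι] (f : ι → ℕ) :
    Set.InjOn (fun i => update f i (f i - 1)) {i | 0 < f i} := by
  intro i hi j _ h
  by_contra hij
  have : f i - 1 = f i := by simpa [hij] using congrFun h i
  exact (Nat.sub_lt hi one_pos).ne this

-- If `f` is not weakly decreasing, then `f (i + 1) = f i + 1` for some `i`, so two shifted parts
-- coincide and both sides vanish.
open Classical in
lemma sum_invHookProd_rowLen_eq {f : ℕ → ℕ} (hf : ∀ i, f (i + 1) ≤ f i + 1)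
    (h0 : ∀ i, k ≤ i → f i = 0) (hn : ∑ i ∈ range k, f i = n) :
    ∑ μ ∈ diagrams n with μ.rowLen = f, invHookProd μ =
      frobeniusQuotient (range k) (shiftedPart k f) := by
  by_cases hanti : Antitone f
  · obtain ⟨μ, rfl⟩ := exists_rowLen_eq hanti h0
    have hk : μ.colLen 0 ≤ k := by
      by_contra! hlt
      exact (lt_rowLen_iff_lt_colLen.2 hlt).ne_bot (h0 k le_rfl)
    have hμ : μ ∈ diagrams n := mem_diagrams.2 ((card_eq_sum_rowLen hk).trans hn)
    have hfilter : {ν ∈ diagrams n | ν.rowLen = μ.rowLen} = {μ} := by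
      ext ν
      simp only [mem_filter, rowLen_injective.eq_iff, mem_singleton, and_iff_right_iff_imp]
      rintro rfl
      exact hμ
    rw [hfilter, sum_singleton, invHookProd_eq_frobeniusQuotient hk]
  · obtain ⟨i, hi⟩ : ∃ i, f i < f (i + 1) := by
      by_contra! h
      exact hanti (antitone_nat_of_succ_le h)
    have hik : i + 1 < k := by
      by_contra! hle
      exact hi.ne_bot (h0 _ hle)
    have hrepeat : shiftedPart k f i = shiftedPart k f (i + 1) := by
      have := hf i
      simp only [shiftedPart]
      omega
    rw [frobeniusQuotient_eq_zero (mem_range.2 (by omega)) (mem_range.2 hik) i.lt_succ_self hrepeat,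
      filter_false_of_mem, sum_empty]
    rintro μ - rfl
    exact hanti (rowLen_antitone μ)

open Classical in
lemma sum_invHookProd_rowLen_eq_update_add_one {ν : YoungDiagram} (hν : ν.card = n)
    (hk : ν.colLen 0 ≤ k) {i : ℕ} (hi : i ∈ range k) :
    ∑ μ ∈ diagrams (n + 1) with μ.rowLen = update ν.rowLen i (ν.rowLen i + 1), invHookProd μ =
      frobeniusQuotient (range k)
        (update (shiftedPart k ν.rowLen) i (shiftedPart k ν.rowLen i + 1)) := by
  rw [sum_invHookProd_rowLen_eq (k := k), shiftedPart_update, shiftedPart, add_right_comm]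
  · intro j
    have := ν.rowLen_anti j (j + 1) j.le_succ
    simp only [update_apply]
    grind
  · intro j hj
    rw [update_of_ne (by grind), rowLen_eq_zero hk hj]
  · rw [sum_update_of_mem hi, ← hν, card_eq_sum_rowLen hk,
      sum_eq_add_sum_sdiff_singleton_of_mem hi]
    ring

open Classical in
lemma sum_invHookProd_rowLen_eq_update_sub_one {μ : YoungDiagram} (hμ : μ.card = n + 1)
    (hk : μ.colLen 0 ≤ k) {i : ℕ} (hi : i ∈ range k) (hpos : 0 < μ.rowLen i) :
    ∑ ν ∈ diagrams n with ν.rowLen = update μ.rowLen i (μ.rowLen i - 1), invHookProd ν =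
      frobeniusQuotient (range k)
        (update (shiftedPart k μ.rowLen) i (shiftedPart k μ.rowLen i - 1)) := by
  rw [sum_invHookProd_rowLen_eq (k := k), shiftedPart_update, shiftedPart, Nat.sub_add_comm hpos]
  · intro j
    have := μ.rowLen_anti j (j + 1) j.le_succ
    simp only [update_apply]
    grind
  · intro j hj
    rw [update_of_ne (by grind), rowLen_eq_zero hk hj]
  · have hcard := card_eq_sum_rowLen hk
    rw [sum_eq_add_sum_sdiff_singleton_of_mem hi] at hcard
    rw [sum_update_of_mem hi]
    omega

open Classical in
lemma sum_invHookProd_above {ν : YoungDiagram} (hν : ν.card = n) :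
    ∑ μ ∈ diagrams (n + 1) with ν ≤ μ, invHookProd μ = invHookProd ν := by
  have hcol : ν.colLen 0 ≤ n := hν ▸ colLen_le_card ν 0
  have hcol' : ν.colLen 0 ≤ n + 1 := hcol.trans n.le_succ
  have hcover : ∀ μ ∈ diagrams (n + 1), ν ≤ μ ↔
      ∃ i ∈ range (n + 1), μ.rowLen = update ν.rowLen i (ν.rowLen i + 1) := by
    intro μ hμ
    rw [mem_diagrams] at hμ
    exact le_iff_exists_rowLen_eq_update (hμ.trans (by rw [hν])) (hμ ▸ colLen_le_card μ 0)
  have hlast : shiftedPart (n + 1) ν.rowLen n = 0 := by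
    simp [shiftedPart, rowLen_eq_zero hcol le_rfl]
  rw [filter_congr hcover, sum_filter_exists_eq _ _ (update_add_one_injective _).injOn,
    sum_congr rfl fun i => sum_invHookProd_rowLen_eq_update_add_one hν hcol',
    sum_frobeniusQuotient_update_add_one
      (shiftedPart_strictAntiOn (rowLen_antitone ν)).injOn (self_mem_range_succ n) hlast,
    invHookProd_eq_frobeniusQuotient hcol']

-- Lowering an empty row other than the last repeats the next shifted part.
lemma frobeniusQuotient_update_sub_one_eq_zero {μ : YoungDiagram} {i : ℕ}
    (hrow : μ.rowLen i = 0) (hpos : 0 < shiftedPart k μ.rowLen i) :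
    frobeniusQuotient (range k) (update (shiftedPart k μ.rowLen) i
      (shiftedPart k μ.rowLen i - 1)) = 0 := by
  have hnext : μ.rowLen (i + 1) = 0 :=
    Nat.eq_zero_of_le_zero (hrow ▸ rowLen_antitone μ i.le_succ)
  simp only [shiftedPart, hrow] at hpos
  refine frobeniusQuotient_eq_zero (mem_range.2 (by omega)) (mem_range.2 (by omega))
    i.lt_succ_self ?_
  rw [update_self, update_of_ne i.succ_ne_self]
  simp only [shiftedPart, hrow, hnext]
  omega

open Classical in
lemma sum_invHookProd_below {μ : YoungDiagram} (hμ : μ.card = n + 1) :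
    ∑ ν ∈ diagrams n with ν ≤ μ, invHookProd ν = (n + 1) * invHookProd μ := by
  have hcol : μ.colLen 0 ≤ n + 1 := hμ ▸ colLen_le_card μ 0
  have hcover : ∀ ν ∈ diagrams n, ν ≤ μ ↔ ∃ i ∈ {i ∈ range (n + 1) | 0 < μ.rowLen i},
      ν.rowLen = update μ.rowLen i (μ.rowLen i - 1) := by
    intro ν hν
    rw [mem_diagrams] at hν
    simp only [le_iff_exists_rowLen_eq_update (hμ.trans (by rw [hν])) hcol, eq_update_add_one_iff,
      mem_filter, and_assoc]
  have hinj : Set.InjOn (fun i => update μ.rowLen i (μ.rowLen i - 1))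
      ({i ∈ range (n + 1) | 0 < μ.rowLen i} : Finset ℕ) :=
    (update_sub_one_injOn μ.rowLen).mono fun i hi => (mem_filter.1 hi).2
  have hterm : ∀ i ∈ {i ∈ range (n + 1) | 0 < μ.rowLen i},
      ∑ ν ∈ diagrams n with ν.rowLen = update μ.rowLen i (μ.rowLen i - 1), invHookProd ν =
        frobeniusQuotient (range (n + 1)) (update (shiftedPart (n + 1) μ.rowLen) i
          (shiftedPart (n + 1) μ.rowLen i - 1)) := fun i hi =>
    sum_invHookProd_rowLen_eq_update_sub_one hμ hcol (mem_filter.1 hi).1 (mem_filter.1 hi).2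
  have hextend : {i ∈ range (n + 1) | 0 < μ.rowLen i} ⊆
      {i ∈ range (n + 1) | 0 < shiftedPart (n + 1) μ.rowLen i} :=
    monotone_filter_right _ fun i _ hi => Nat.add_pos_left hi _
  rw [filter_congr hcover, sum_filter_exists_eq _ _ hinj, sum_congr rfl hterm,
    sum_subset hextend fun i hi hi' => ?_,
    sum_frobeniusQuotient_update_sub_one (shiftedPart_strictAntiOn (rowLen_antitone μ)).injOn,
    ← invHookProd_eq_frobeniusQuotient hcol, card_range, ← Nat.cast_sum, sum_shiftedPart,
    ← card_eq_sum_rowLen hcol, hμ]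
  · push_cast
    ring
  · have ⟨hin, hpos⟩ := mem_filter.1 hi
    exact frobeniusQuotient_update_sub_one_eq_zero
      (Nat.eq_zero_of_not_pos fun h => hi' (mem_filter.2 ⟨hin, h⟩)) hpos

open Classical in
lemma add_one_mul_sum_invHookProd_sq (n : ℕ) :
    (n + 1) * ∑ μ ∈ diagrams (n + 1), invHookProd μ ^ 2 = ∑ ν ∈ diagrams n, invHookProd ν ^ 2 :=
  calc (n + 1) * ∑ μ ∈ diagrams (n + 1), invHookProd μ ^ 2
    _ = ∑ μ ∈ diagrams (n + 1), ∑ ν ∈ diagrams n with ν ≤ μ, invHookProd ν * invHookProd μ := by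
      rw [mul_sum]
      refine sum_congr rfl fun μ hμ => ?_
      rw [← sum_mul, sum_invHookProd_below (mem_diagrams.1 hμ)]
      ring
    _ = ∑ ν ∈ diagrams n, ∑ μ ∈ diagrams (n + 1) with ν ≤ μ, invHookProd ν * invHookProd μ :=
      sum_comm' fun μ ν => by simp only [mem_filter]; tauto
    _ = ∑ ν ∈ diagrams n, invHookProd ν ^ 2 := by
      refine sum_congr rfl fun ν hν => ?_
      rw [← mul_sum, sum_invHookProd_above (mem_diagrams.1 hν), sq]

lemma sum_invHookProd_sq (n : ℕ) : ∑ μ ∈ diagrams n, invHookProd μ ^ 2 = (n ! : ℝ)⁻¹ := by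
  induction n with
  | zero => simp [diagrams_zero, invHookProd]
  | succ n ih =>
    have hn : (n + 1 : ℝ) ≠ 0 := by positivity
    rw [← add_one_mul_sum_invHookProd_sq] at ih
    rw [Nat.factorial_succ, Nat.cast_mul, mul_inv, ← ih, Nat.cast_succ, inv_mul_cancel_left₀ hn]

end Branching

end HookLength

/-- For every positive integer `n`, `∑_{λ ⊢ n} (n!/∏_{s∈λ} h(s))² = n!`,
the sum being over all partitions (Young diagrams) of size `n`. -/
theorem stmt_5 (n : ℕ) (hn : 0 < n) :
    ∑ᶠ μ : {μ : YoungDiagram // μ.card = n},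
      ((n ! : ℝ) / ∏ s ∈ μ.1.cells, (hookLen μ.1 s : ℝ)) ^ 2 = (n ! : ℝ) := by
  have hfactorial : (n ! : ℝ) ≠ 0 := by positivity
  calc ∑ᶠ μ : {μ : YoungDiagram // μ.card = n},
        ((n ! : ℝ) / ∏ s ∈ μ.1.cells, (hookLen μ.1 s : ℝ)) ^ 2
    _ = ∑ μ ∈ HookLength.diagrams n, ((n ! : ℝ) * HookLength.invHookProd μ) ^ 2 := by
      rw [← finsum_mem_finset_eq_sum]
      simp only [HookLength.mem_diagrams]
      exact finsum_subtype_eq_finsum_cond (p := fun μ : YoungDiagram => μ.card = n)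
        (f := fun μ => ((n ! : ℝ) * HookLength.invHookProd μ) ^ 2)
    _ = (n ! : ℝ) ^ 2 * ∑ μ ∈ HookLength.diagrams n, HookLength.invHookProd μ ^ 2 := by
      simp only [mul_pow, Finset.mul_sum]
    _ = n ! := by
      rw [HookLength.sum_invHookProd_sq, sq, mul_inv_cancel_right₀ hfactorial]
end

section
/- Let q be a real number with q > 0 and q ≠ 1. For every partition λ of n with conjugate λ', J_λ(q) + J_{λ'}(q) = q^{2·binom(n,2)} · ( J_λ(1/q) + J_{λ'}(1/q) ), where J_μ(x) is evaluated by the same defining formula at the argument x. -/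
/-- `n(λ) = ∑_i (i−1)λ_i`, i.e. the sum over all cells of the (0-indexed) row index. -/
def nstat (μ : YoungDiagram) : ℕ := ∑ s ∈ μ.cells, s.1

/-- `J_λ(x) = x^{|λ|²−|λ|−2n(λ)} (∏_{r=1}^{|λ|}(1−x^{−r}))² / ∏_{s∈λ}(1−x^{−h(s)})²`. -/
noncomputable def Jpoly (x : ℝ) (μ : YoungDiagram) : ℝ :=
  x ^ ((μ.card : ℤ) ^ 2 - (μ.card : ℤ) - 2 * (nstat μ : ℤ)) *
    (∏ r ∈ Finset.range μ.card, (1 - x ^ (-(r + 1 : ℤ)))) ^ 2 /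
    ∏ s ∈ μ.cells, (1 - x ^ (-(hookLen μ s : ℤ))) ^ 2

/-!
Termwise, `J_{λ'}(q) = q^{2 binom(n,2)} J_λ(1/q)`; adding this to the same identity for `λ'` gives
the theorem.

Up to a power of `x`, `J_λ(x)` is the square of `∏_r (1 - x^{-r}) / ∏_s (1 - x^{-h(s)})`, which
depends on `λ` only up to conjugation. Inverting `x` turns each factor `1 - x^{-k}` into
`-x^k (1 - x^{-k})`. The signs cancel, as numerator and denominator have `n` factors each, and the
powers of `x` multiply to exponent `∑_r r - ∑_s h(s) = binom(n,2) - n(λ) - n(λ')`, because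
reflecting each row and each column shows that the arm and leg lengths sum to `n(λ')` and `n(λ)`.
-/

section Transpose

@[to_additive]
theorem prod_cells_transpose {M : Type*} [CommMonoid M] (μ : YoungDiagram) (f : ℕ × ℕ → M) :
    ∏ s ∈ μ.transpose.cells, f s = ∏ s ∈ μ.cells, f s.swap := by
  simp [YoungDiagram.transpose]

theorem card_transpose (μ : YoungDiagram) : μ.transpose.card = μ.card :=
  Finset.card_map _

theorem hookLen_transpose_swap (μ : YoungDiagram) (s : ℕ × ℕ) :
    hookLen μ.transpose s.swap = hookLen μ s := by
  simp only [hookLen, YoungDiagram.rowLen_transpose, YoungDiagram.colLen_transpose,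
    Prod.fst_swap, Prod.snd_swap]
  ring

theorem nstat_transpose (μ : YoungDiagram) : nstat μ.transpose = ∑ s ∈ μ.cells, s.2 :=
  sum_cells_transpose μ Prod.fst

end Transpose

section HookSum

/-- The arm `a(s)` of a cell `s` of `μ`: the number of cells to its right in the same row. The
final `- 1` comes from the 0-indexing of cells; outside `μ` the value is the truncated `0`. -/
def armLength (μ : YoungDiagram) (s : ℕ × ℕ) : ℕ := μ.rowLen s.1 - s.2 - 1

/-- The leg `l(s)` of a cell `s` of `μ`: the number of cells below it in the same column, with the
conventions of `armLength`. -/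
def legLength (μ : YoungDiagram) (s : ℕ × ℕ) : ℕ := μ.colLen s.2 - s.1 - 1

theorem hookLen_eq_armLength_add_legLength_add_one (μ : YoungDiagram) (s : ℕ × ℕ) :
    hookLen μ s = armLength μ s + legLength μ s + 1 := rfl

theorem armLength_transpose_swap (μ : YoungDiagram) (s : ℕ × ℕ) :
    armLength μ.transpose s.swap = legLength μ s := by
  simp [armLength, legLength]

theorem sum_armLength (μ : YoungDiagram) :
    ∑ s ∈ μ.cells, armLength μ s = nstat μ.transpose := by
  rw [nstat_transpose]
  -- `(i, j) ↦ (i, a(i, j))` reverses each row.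
  refine Finset.sum_nbij' (fun s ↦ (s.1, armLength μ s)) (fun s ↦ (s.1, armLength μ s))
    ?_ ?_ ?_ ?_ fun _ _ ↦ rfl
  all_goals
    rintro ⟨i, j⟩ hs
    simp only [armLength, YoungDiagram.mem_cells, YoungDiagram.mem_iff_lt_rowLen,
      Prod.mk.injEq, true_and] at hs ⊢
    omega

theorem sum_legLength (μ : YoungDiagram) : ∑ s ∈ μ.cells, legLength μ s = nstat μ := by
  simpa only [sum_cells_transpose, armLength_transpose_swap, YoungDiagram.transpose_transpose]
    using sum_armLength μ.transpose

theorem sum_hookLen (μ : YoungDiagram) :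
    ∑ s ∈ μ.cells, hookLen μ s = nstat μ + nstat μ.transpose + μ.card := by
  simp only [hookLen_eq_armLength_add_legLength_add_one, Finset.sum_add_distrib, sum_armLength,
    sum_legLength, Finset.sum_const, smul_eq_mul, mul_one]
  ring

end HookSum

section BinomialTwo

theorem sum_range_add_one_eq_choose_two_add (n : ℕ) :
    ∑ r ∈ Finset.range n, (r + 1) = n.choose 2 + n := by
  simp [Finset.sum_add_distrib, Finset.sum_range_id, Nat.choose_two_right]

theorem sq_sub_self_eq_two_mul_choose_two (n : ℕ) : (n : ℤ) ^ 2 - n = 2 * n.choose 2 := by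
  qify
  rw [Nat.cast_choose_two]
  ring

end BinomialTwo

section HookQuotient

variable {K : Type*} [Field K] {x : K}

theorem one_sub_pow_eq_neg_pow_mul (hx : x ≠ 0) (k : ℕ) :
    1 - x ^ k = -(x ^ k * (1 - x⁻¹ ^ k)) := by
  rw [mul_sub, ← mul_pow, mul_inv_cancel₀ hx]
  ring

theorem prod_one_sub_pow {ι : Type*} (hx : x ≠ 0) (t : Finset ι) (f : ι → ℕ) :
    ∏ i ∈ t, (1 - x ^ f i) =
      (-1) ^ t.card * (x ^ (∑ i ∈ t, f i) * ∏ i ∈ t, (1 - x⁻¹ ^ f i)) := by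
  simp_rw [one_sub_pow_eq_neg_pow_mul hx]
  rw [Finset.prod_neg, Finset.prod_mul_distrib, Finset.prod_pow_eq_pow_sum]

/-- The quotient `∏_{r=1}^{|μ|} (1 - x^r) / ∏_{s∈μ} (1 - x^{h(s)})` of the `x`-analogue of the hook
length formula, whose square is `J_μ(x⁻¹)` up to a power of `x`. It takes the junk value `0` when
some `x^{h(s)}` equals `1`. -/
def hookQuotient (x : K) (μ : YoungDiagram) : K :=
  (∏ r ∈ Finset.range μ.card, (1 - x ^ (r + 1))) / ∏ s ∈ μ.cells, (1 - x ^ hookLen μ s)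

theorem hookQuotient_transpose (x : K) (μ : YoungDiagram) :
    hookQuotient x μ.transpose = hookQuotient x μ := by
  simp only [hookQuotient, card_transpose, prod_cells_transpose, hookLen_transpose_swap]

theorem hookQuotient_eq_zpow_mul_hookQuotient_inv (hx : x ≠ 0) (μ : YoungDiagram) :
    hookQuotient x μ =
      x ^ ((μ.card.choose 2 : ℤ) - nstat μ - nstat μ.transpose) * hookQuotient x⁻¹ μ := by
  have exponent : (μ.card.choose 2 : ℤ) - nstat μ - nstat μ.transpose =
      (μ.card.choose 2 + μ.card : ℕ) - (nstat μ + nstat μ.transpose + μ.card : ℕ) := by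
    push_cast
    ring
  simp only [hookQuotient]
  rw [prod_one_sub_pow hx, prod_one_sub_pow hx, Finset.card_range,
    mul_div_mul_left _ _ (pow_ne_zero _ (neg_ne_zero.mpr one_ne_zero)), mul_div_mul_comm,
    sum_range_add_one_eq_choose_two_add, sum_hookLen, exponent, zpow_sub₀ hx, zpow_natCast,
    zpow_natCast]

end HookQuotient

theorem Jpoly_eq_zpow_mul_hookQuotient_inv_sq (x : ℝ) (μ : YoungDiagram) :
    Jpoly x μ =
      x ^ (2 * (μ.card.choose 2 : ℤ) - 2 * nstat μ) * hookQuotient x⁻¹ μ ^ 2 := by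
  have inv_pow_eq (k : ℕ) : x⁻¹ ^ k = x ^ (-(k : ℤ)) := by
    rw [zpow_neg, zpow_natCast, inv_pow]
  simp only [Jpoly, hookQuotient, inv_pow_eq, sq_sub_self_eq_two_mul_choose_two, div_pow,
    Finset.prod_pow, mul_div_assoc, Nat.cast_add, Nat.cast_one]

theorem Jpoly_transpose {q : ℝ} (hq : q ≠ 0) (μ : YoungDiagram) :
    Jpoly q μ.transpose = q ^ (2 * μ.card.choose 2) * Jpoly q⁻¹ μ := by
  set N := μ.card.choose 2
  have exponent : 2 * (N : ℤ) - 2 * nstat μ.transpose =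
      (2 * N : ℕ) + -(2 * (N : ℤ) - 2 * nstat μ) + (N - nstat μ - nstat μ.transpose) * (2 : ℕ) := by
    push_cast
    ring
  calc Jpoly q μ.transpose
      = q ^ (2 * (N : ℤ) - 2 * nstat μ.transpose) * hookQuotient q⁻¹ μ ^ 2 := by
        rw [Jpoly_eq_zpow_mul_hookQuotient_inv_sq, card_transpose, hookQuotient_transpose]
    _ = q ^ (2 * N) * (q⁻¹ ^ (2 * (N : ℤ) - 2 * nstat μ) *
          (q ^ ((N : ℤ) - nstat μ - nstat μ.transpose) * hookQuotient q⁻¹ μ) ^ 2) := by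
        rw [exponent, zpow_add₀ hq, zpow_add₀ hq, zpow_mul, zpow_natCast, zpow_natCast, inv_zpow']
        ring
    _ = q ^ (2 * N) * Jpoly q⁻¹ μ := by
        rw [Jpoly_eq_zpow_mul_hookQuotient_inv_sq, inv_inv,
          ← hookQuotient_eq_zpow_mul_hookQuotient_inv hq]

theorem stmt_6_general (q : ℝ) (hq : q ≠ 0) (_hq1 : |q| ≠ 1) (n : ℕ) (μ : YoungDiagram)
    (hμ : μ.card = n) :
    Jpoly q μ + Jpoly q μ.transpose =
      q ^ (2 * n.choose 2) * (Jpoly q⁻¹ μ + Jpoly q⁻¹ μ.transpose) := by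
  have conj : Jpoly q μ.transpose = q ^ (2 * n.choose 2) * Jpoly q⁻¹ μ :=
    hμ ▸ Jpoly_transpose hq μ
  have conj_transpose : Jpoly q μ = q ^ (2 * n.choose 2) * Jpoly q⁻¹ μ.transpose := by
    simpa only [YoungDiagram.transpose_transpose, card_transpose, hμ]
      using Jpoly_transpose hq μ.transpose
  rw [conj, conj_transpose]
  ring

/-- For real `q > 0`, `q ≠ 1` and any partition `λ` of `n` with conjugate `λ'`,
`J_λ(q) + J_{λ'}(q) = q^{2·C(n,2)} (J_λ(1/q) + J_{λ'}(1/q))`. -/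
theorem stmt_6 (q : ℝ) (hq : 0 < q) (hq1 : q ≠ 1) (n : ℕ) (μ : YoungDiagram)
    (hμ : μ.card = n) :
    Jpoly q μ + Jpoly q μ.transpose =
      q ^ (2 * n.choose 2) * (Jpoly q⁻¹ μ + Jpoly q⁻¹ μ.transpose) :=
  stmt_6_general q hq.ne' (by rwa [abs_of_pos hq]) n μ hμ
end

section
/- Let R be a commutative ring, x ∈ R, and λ a partition. Then ∏_{s ∈ λ, a(s)=0} (1 − x^{l(s)+1}) = ∏_{i≥1} ∏_{k=1}^{m_i(λ)} (1 − x^k), where the left product is over the cells of λ with arm length zero. -/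
/-- `m_i(λ)`: the number of parts of `λ` of size `i` (for `i ≥ 1`), expressed via the
conjugate partition: `m_i = λ'_i − λ'_{i+1}` where `λ'_i = colLen (i−1)`. -/
def mult (μ : YoungDiagram) (i : ℕ) : ℕ := μ.colLen (i - 1) - μ.colLen i

/-! The arm-zero cells of column `j` (counted from `0`) are the last cells of the rows of length
`j + 1`, so they occupy the rows `λ'_{j+2}, …, λ'_{j+1} - 1` (also counted from `0`). Read from
the bottom up, the values of `l(s) + 1` on them are `1, 2, …, m_{j+1}(λ)`. -/

theorem rowLen_eq_succ_iff_mem_Ico (μ : YoungDiagram) {i j : ℕ} :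
    μ.rowLen i = j + 1 ↔ i ∈ Finset.Ico (μ.colLen (j + 1)) (μ.colLen j) := by
  rw [Finset.mem_Ico, ← not_lt, ← YoungDiagram.mem_iff_lt_colLen, ← YoungDiagram.mem_iff_lt_colLen,
    YoungDiagram.mem_iff_lt_rowLen, YoungDiagram.mem_iff_lt_rowLen]
  omega

theorem colLen_eq_zero_iff_rowLen_zero_le (μ : YoungDiagram) {j : ℕ} :
    μ.colLen j = 0 ↔ μ.rowLen 0 ≤ j := by
  rw [← not_lt, ← YoungDiagram.mem_iff_lt_rowLen, YoungDiagram.mem_iff_lt_colLen,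
    Nat.pos_iff_ne_zero, not_not]

theorem mem_filter_rowLen_eq_succ_iff (μ : YoungDiagram) (s : ℕ × ℕ) :
    s ∈ μ.cells.filter (fun s => μ.rowLen s.1 = s.2 + 1) ↔
      s.2 ∈ Finset.range (μ.rowLen 0) ∧
        s.1 ∈ Finset.Ico (μ.colLen (s.2 + 1)) (μ.colLen s.2) := by
  rw [Finset.mem_filter, YoungDiagram.mem_cells, Finset.mem_range, ← rowLen_eq_succ_iff_mem_Ico]
  refine and_congr_left fun last_in_row => ?_
  have mem_diagram : (s.1, s.2) ∈ μ := YoungDiagram.mem_iff_lt_rowLen.2 (by omega)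
  have lt_rowLen_zero : s.2 < μ.rowLen 0 :=
    (YoungDiagram.mem_iff_lt_rowLen.1 mem_diagram).trans_le (μ.rowLen_anti 0 s.1 (Nat.zero_le _))
  exact iff_of_true mem_diagram lt_rowLen_zero

theorem mult_succ (μ : YoungDiagram) (j : ℕ) :
    mult μ (j + 1) = μ.colLen j - μ.colLen (j + 1) :=
  rfl

theorem mult_succ_eq_zero_of_rowLen_zero_le (μ : YoungDiagram) {j : ℕ} (h : μ.rowLen 0 ≤ j) :
    mult μ (j + 1) = 0 := by
  rw [mult_succ, (colLen_eq_zero_iff_rowLen_zero_le μ).2 h, Nat.zero_sub]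

section CommMonoid

variable {M : Type*} [CommMonoid M] (f : ℕ → M)

theorem prod_Ico_comp_sub_eq_prod_range (a b : ℕ) :
    ∏ i ∈ Finset.Ico a b, f (b - i) = ∏ k ∈ Finset.range (b - a), f (k + 1) := by
  rw [Finset.prod_Ico_reflect f a b.le_succ, Finset.prod_Ico_eq_prod_range]
  congr! 2 <;> omega

theorem finprod_prod_range_mult_succ (μ : YoungDiagram) (g : ℕ → ℕ → M) :
    ∏ᶠ j : ℕ, ∏ k ∈ Finset.range (mult μ (j + 1)), g j k =
      ∏ j ∈ Finset.range (μ.rowLen 0), ∏ k ∈ Finset.range (mult μ (j + 1)), g j k := by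
  refine finprod_eq_prod_of_mulSupport_subset _ fun j hj => ?_
  contrapose! hj
  have rowLen_zero_le : μ.rowLen 0 ≤ j := by simpa using hj
  simp [mult_succ_eq_zero_of_rowLen_zero_le μ rowLen_zero_le]

theorem stmt_10_general (μ : YoungDiagram) :
    ∏ s ∈ μ.cells.filter (fun s => μ.rowLen s.1 = s.2 + 1), f (μ.colLen s.2 - s.1) =
      ∏ᶠ j : ℕ, ∏ k ∈ Finset.range (mult μ (j + 1)), f (k + 1) := by
  rw [finprod_prod_range_mult_succ μ fun _ k => f (k + 1),
    Finset.prod_finset_product_right _ _ (fun j => Finset.Ico (μ.colLen (j + 1)) (μ.colLen j))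
      (mem_filter_rowLen_eq_succ_iff μ)]
  refine Finset.prod_congr rfl fun j _ => ?_
  rw [mult_succ, prod_Ico_comp_sub_eq_prod_range]

end CommMonoid

/-- In any commutative ring `R`, for `x ∈ R` and a partition `λ`:
`∏_{s ∈ λ, a(s)=0} (1 − x^{l(s)+1}) = ∏_{i≥1} ∏_{k=1}^{m_i(λ)} (1 − x^k)`,
the left product being over the cells of `λ` with arm length zero
(i.e. cells `(i,j)` which are last in their row: `rowLen i = j + 1`),
and `l(s)+1 = colLen j − i` for such a cell. -/
theorem stmt_10 (R : Type*) [CommRing R] (x : R) (μ : YoungDiagram) :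
    (∏ s ∈ μ.cells.filter (fun s => μ.rowLen s.1 = s.2 + 1),
        (1 - x ^ (μ.colLen s.2 - s.1))) =
      ∏ᶠ i : ℕ, ∏ k ∈ Finset.range (mult μ (i + 1)), (1 - x ^ (k + 1)) :=
  stmt_10_general (fun n => 1 - x ^ n) μ
end

section
/- Let q be a prime power, F_q the finite field with q elements, and u a real number with 0 < u < 1. Then the product over all monic irreducible polynomials φ ∈ F_q[X] with φ ≠ X of ∏_{r=1}^∞ 1/(1 − u^{deg φ} · q^{−r·deg φ}) converges and equals 1/(1 − u). -/
/-!
Weight a monic polynomial `f` by `t ^ deg f`. There are `q ^ n` monic polynomials of degree `n`, so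
the total weight is `(1 - q t)⁻¹`, and Euler's sieve (multiplying the total by `1 - t ^ deg φ`
discards the multiples of `φ`) turns it into `∏ (1 - t ^ deg φ)⁻¹`. Removing the factor of `X`
leaves `(1 - t) / (1 - q t)`. For `t = u / q ^ r` this is a quotient of consecutive terms of the
sequence `1 - u / q ^ r`, so the product over `r ≥ 1` telescopes to `1 / (1 - u)`; the double
product converges absolutely, so the two products may be interchanged.
-/

open Filter Finset Polynomial Topology

section InfiniteSums

lemma summable_comp_of_summable_card_mul {α ι : Type*} (d : α → ι) [∀ n, Finite {a // d a = n}]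
    {g : ι → ℝ} (hg : ∀ n, 0 ≤ g n) (hsum : Summable fun n ↦ Nat.card {a // d a = n} * g n) :
    Summable fun a ↦ g (d a) := by
  rw [← (Equiv.sigmaFiberEquiv d).summable_iff]
  refine (summable_sigma_of_nonneg fun _ ↦ hg _).2 ⟨fun n ↦ .of_finite, hsum.congr fun n ↦ ?_⟩
  calc (Nat.card {a // d a = n} * g n : ℝ)
      = ∑' _ : {a // d a = n}, g n := by rw [tsum_const, nsmul_eq_mul]
    _ = ∑' a : {a // d a = n}, g (d a) := tsum_congr fun a ↦ by rw [a.2]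

lemma hasSum_card_nsmul_of_hasSum_comp {α ι E : Type*} [AddCommMonoid E] [TopologicalSpace E]
    [ContinuousAdd E] [RegularSpace E] (d : α → ι) [∀ n, Finite {a // d a = n}] {g : ι → E} {s : E}
    (hs : HasSum (fun a ↦ g (d a)) s) : HasSum (fun n ↦ Nat.card {a // d a = n} • g n) s := by
  refine ((Equiv.sigmaFiberEquiv d).hasSum_iff.2 hs).sigma fun n ↦ ?_
  have fiber_const : (fun a : {a // d a = n} ↦ g (d a)) = fun _ ↦ g n :=
    funext fun a ↦ congrArg g a.2
  have := Fintype.ofFinite {a // d a = n}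
  have fiber_sum : HasSum (fun _ : {a // d a = n} ↦ g n) (Nat.card {a // d a = n} • g n) := by
    simpa [Nat.card_eq_fintype_card] using hasSum_fintype fun _ : {a // d a = n} ↦ g n
  exact fiber_const ▸ fiber_sum

end InfiniteSums

section InfiniteProducts

lemma multipliable_one_sub_inv_of_summable_norm {ι K : Type*} [NontriviallyNormedField K]
    [CompleteSpace K] {x : ι → K} (hx : Summable fun i ↦ ‖x i‖) :
    Multipliable fun i ↦ (1 - x i)⁻¹ := by
  have differentiable : DifferentiableAt K (fun y : K ↦ (1 - y)⁻¹) 0 := by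
    fun_prop (disch := simp)
  have inv_isBigO : (fun y : K ↦ (1 - y)⁻¹ - 1) =O[𝓝 0] id := by
    simpa [Function.id_def] using differentiable.isBigO_sub
  have inv_summable : Summable fun i ↦ ‖(1 - x i)⁻¹ - 1‖ := inv_isBigO.comp_summable_norm hx
  simpa only [add_sub_cancel] using multipliable_one_add_of_summable inv_summable

variable {K : Type*} [NormedField K]

lemma tendsto_prod_range_succ_div {f : ℕ → K} {a : K} (hf : ∀ n, f n ≠ 0)
    (ha : Tendsto f atTop (𝓝 a)) :
    Tendsto (fun n ↦ ∏ i ∈ range n, f (i + 1) / f i) atTop (𝓝 (a / f 0)) := by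
  have telescope (n : ℕ) : ∏ i ∈ range n, f (i + 1) / f i = f n / f 0 := by
    refine prod_range_induction _ (fun n ↦ f n / f 0) (div_self (hf 0)) n fun n _ ↦ ?_
    field_simp [hf n]
  simpa only [telescope] using ha.div_const (f 0)

lemma hasProd_tprod_of_tendsto_prod_range {ι : Type*} {f : ι × ℕ → K} {b : ℕ → K} {c : K}
    (hf : Multipliable f) (hrow : ∀ i, Multipliable fun r ↦ f (i, r))
    (hcol : ∀ r, HasProd (fun i ↦ f (i, r)) (b r))
    (hb : Tendsto (fun n ↦ ∏ r ∈ range n, b r) atTop (𝓝 c)) :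
    HasProd (fun i ↦ ∏' r, f (i, r)) c := by
  have hcols : HasProd b (∏' x, f x) :=
    ((Equiv.prodComm ℕ ι).hasProd_iff.2 hf.hasProd).prod_fiberwise hcol
  rw [← tendsto_nhds_unique hcols.tendsto_prod_nat hb]
  exact hf.hasProd.prod_fiberwise fun i ↦ (hrow i).hasProd

end InfiniteProducts

section EulerSieve

variable {M ι K : Type*} [CommMonoid M] [NormedField K] [CompleteSpace K] {p : ι → M}

/-- The elements of `M` that survive sieving by the `p i` with `i ∈ S`, i.e. are divisible by none
of them. -/
def siftedSet (p : ι → M) (S : Finset ι) : Set M := {m | ∀ i ∈ S, ¬ p i ∣ m}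

lemma tsum_siftedSet_insert [IsLeftCancelMul M] [DecidableEq ι] {S : Finset ι} {j : ι}
    (hcop : ∀ i ∈ S, ∀ m, p i ∣ p j * m → p i ∣ m) {w : M →* K} (hw : Summable fun m ↦ ‖w m‖) :
    ∑' m, (siftedSet p (insert j S)).indicator w m =
      (1 - w (p j)) * ∑' m, (siftedSet p S).indicator w m := by
  classical
  have multiples : ∑' m, {m | p j ∣ m}.indicator ((siftedSet p S).indicator w) m =
      w (p j) * ∑' m, (siftedSet p S).indicator w m := by
    rw [← (mul_right_injective (p j)).tsum_eq, ← tsum_mul_left]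
    · refine tsum_congr fun m ↦ ?_
      have mul_mem_iff : p j * m ∈ siftedSet p S ↔ m ∈ siftedSet p S :=
        forall₂_congr fun i hi ↦ not_congr ⟨hcop i hi m, fun h ↦ h.mul_left _⟩
      simp [Set.indicator_apply, mul_mem_iff]
    · intro m hm
      obtain ⟨n, rfl⟩ : m ∈ {m | p j ∣ m} := Set.mem_of_indicator_ne_zero hm
      exact ⟨n, rfl⟩
  have split (m : M) : (siftedSet p (insert j S)).indicator w m =
      (siftedSet p S).indicator w m - {m | p j ∣ m}.indicator ((siftedSet p S).indicator w) m := by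
    by_cases hm : p j ∣ m <;> simp [siftedSet, Set.indicator_apply, hm]
  have hS : Summable ((siftedSet p S).indicator w) := hw.of_norm.indicator _
  rw [tsum_congr split, hS.tsum_sub (hS.indicator _), multiples, sub_mul, one_mul]

lemma tsum_siftedSet [IsLeftCancelMul M]
    (hcop : Pairwise fun i j ↦ ∀ m, p i ∣ p j * m → p i ∣ m) {w : M →* K}
    (hw : Summable fun m ↦ ‖w m‖) (S : Finset ι) :
    ∑' m, (siftedSet p S).indicator w m = (∏ i ∈ S, (1 - w (p i))) * ∑' m, w m := by
  classical
  induction S using Finset.induction_on with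
  | empty => simp [siftedSet]
  | insert j S hj ih =>
    have hcop_j : ∀ i ∈ S, ∀ m, p i ∣ p j * m → p i ∣ m :=
      fun i hi ↦ hcop (ne_of_mem_of_not_mem hi hj)
    rw [tsum_siftedSet_insert hcop_j hw, ih, prod_insert hj, mul_assoc]

lemma tendsto_tsum_siftedSet (hunit : ∀ i, ¬ p i ∣ 1) (hdvd : ∀ m ≠ 1, ∃ i, p i ∣ m) {w : M →* K}
    (hw : Summable fun m ↦ ‖w m‖) :
    Tendsto (fun S ↦ ∑' m, (siftedSet p S).indicator w m) atTop (𝓝 1) := by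
  classical
  have sum_single_one : ∑' m, Set.indicator {1} w m = 1 := by
    rw [tsum_eq_single 1 (by simp +contextual)]
    simp
  rw [← sum_single_one]
  refine tendsto_tsum_of_dominated_convergence hw (fun m ↦ ?_)
    (.of_forall fun S m ↦ norm_indicator_le_norm_self _ _)
  refine tendsto_const_nhds.congr' ?_
  obtain rfl | hm := eq_or_ne m 1
  · exact .of_forall fun S ↦ by simp [siftedSet, hunit]
  · obtain ⟨i, hi⟩ := hdvd m hm
    filter_upwards [eventually_ge_atTop {i}] with S hS
    have hmS : m ∉ siftedSet p S := fun h ↦ h i (hS (mem_singleton_self i)) hi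
    rw [Set.indicator_of_notMem (by simpa using hm), Set.indicator_of_notMem hmS]

theorem hasProd_one_sub_inv_of_pairwise_coprime [IsLeftCancelMul M]
    (hcop : Pairwise fun i j ↦ ∀ m, p i ∣ p j * m → p i ∣ m) (hunit : ∀ i, ¬ p i ∣ 1)
    (hdvd : ∀ m ≠ 1, ∃ i, p i ∣ m) {w : M →* K} (hw : Summable fun m ↦ ‖w m‖) :
    HasProd (fun i ↦ (1 - w (p i))⁻¹) (∑' m, w m) := by
  have sieve_limit : Tendsto (fun S ↦ (∏ i ∈ S, (1 - w (p i))) * ∑' m, w m) atTop (𝓝 1) := by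
    simpa only [tsum_siftedSet hcop hw] using tendsto_tsum_siftedSet hunit hdvd hw
  have total_ne_zero : ∑' m, w m ≠ 0 := by
    intro h
    simp [h] at sieve_limit
  have inverted := (sieve_limit.inv₀ one_ne_zero).const_mul (∑' m, w m)
  rw [inv_one, mul_one] at inverted
  refine inverted.congr fun S ↦ ?_
  rw [prod_inv_distrib, mul_inv_rev, mul_inv_cancel_left₀ total_ne_zero]

end EulerSieve

section MonicPolynomials

/-- The multiplicative monoid of monic polynomials. -/
def monicSubmonoid (R : Type*) [Semiring R] : Submonoid R[X] where
  carrier := {f | f.Monic}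
  one_mem' := monic_one
  mul_mem' := Monic.mul

instance (R : Type*) [Ring R] : IsLeftCancelMul (monicSubmonoid R) where
  mul_left_cancel f _ _ h := Subtype.ext (f.2.isRegular.left (congrArg Subtype.val h))

lemma monicSubmonoid_dvd_iff {R : Type*} [Semiring R] {f g : monicSubmonoid R} :
    f ∣ g ↔ f.1 ∣ g.1 := by
  refine ⟨fun ⟨h, hh⟩ ↦ ⟨h, congrArg Subtype.val hh⟩, fun ⟨h, hh⟩ ↦ ?_⟩
  exact ⟨⟨h, f.2.of_mul_monic_left (hh ▸ g.2)⟩, Subtype.ext hh⟩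

/-- Monic polynomials of degree `n` are determined by their `n` lower coefficients. -/
noncomputable def monicFiberEquiv (R : Type*) [Ring R] [Nontrivial R] (n : ℕ) :
    {f : monicSubmonoid R // f.1.natDegree = n} ≃ (Fin n → R) :=
  (Equiv.subtypeSubtypeEquivSubtypeInter Monic (natDegree · = n)).trans
    ((monicEquivDegreeLT n).trans (degreeLTEquiv R n).toEquiv)

lemma card_monic_natDegree_eq (R : Type*) [Ring R] [Nontrivial R] (n : ℕ) :
    Nat.card {f : monicSubmonoid R // f.1.natDegree = n} = Nat.card R ^ n := by
  rw [Nat.card_congr (monicFiberEquiv R n), Nat.card_fun, Nat.card_fin]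

instance (R : Type*) [Ring R] [Nontrivial R] [Finite R] (n : ℕ) :
    Finite {f : monicSubmonoid R // f.1.natDegree = n} :=
  .of_equiv _ (monicFiberEquiv R n).symm

/-- The completely multiplicative weight `f ↦ t ^ deg f` on monic polynomials. -/
def degreeWeight (R : Type*) {K : Type*} [Semiring R] [Monoid K] (t : K) :
    monicSubmonoid R →* K where
  toFun f := t ^ f.1.natDegree
  map_one' := by simp
  map_mul' f g := by
    rw [Submonoid.coe_mul, f.2.natDegree_mul g.2, pow_add]

variable {K : Type*} [NormedField K]

lemma summable_norm_degreeWeight (R : Type*) [Ring R] [Nontrivial R] [Finite R] {t : K}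
    (ht : Nat.card R * ‖t‖ < 1) : Summable fun f ↦ ‖degreeWeight R t f‖ := by
  have geometric : Summable fun n : ℕ ↦
      (Nat.card {f : monicSubmonoid R // f.1.natDegree = n} : ℝ) * ‖t‖ ^ n := by
    simp only [card_monic_natDegree_eq, Nat.cast_pow, ← mul_pow]
    exact summable_geometric_of_lt_one (by positivity) ht
  exact (summable_comp_of_summable_card_mul (fun f : monicSubmonoid R ↦ f.1.natDegree)
    (fun n ↦ by positivity) geometric).congr fun f ↦ (norm_pow t _).symm

lemma tsum_degreeWeight (R : Type*) [Ring R] [Nontrivial R] [Finite R] [CompleteSpace K]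
    {t : K} (ht : Nat.card R * ‖t‖ < 1) :
    ∑' f, degreeWeight R t f = (1 - Nat.card R * t)⁻¹ := by
  have norm_lt : ‖(Nat.card R : K) * t‖ < 1 := by
    refine lt_of_le_of_lt ?_ ht
    rw [norm_mul]
    gcongr
    simpa using Nat.norm_cast_le (α := K) (Nat.card R)
  have by_degree := hasSum_card_nsmul_of_hasSum_comp (fun f : monicSubmonoid R ↦ f.1.natDegree)
    (g := (t ^ ·)) (summable_norm_degreeWeight R ht).of_norm.hasSum
  simp only [card_monic_natDegree_eq, nsmul_eq_mul, Nat.cast_pow, ← mul_pow] at by_degree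
  exact by_degree.unique (hasSum_geometric_of_norm_lt_one norm_lt)

/-- The monic irreducible polynomials, i.e. the primes of the monoid of monic polynomials. -/
abbrev MonicIrreducible (F : Type*) [Field F] : Type _ := {φ : F[X] // φ.Monic ∧ Irreducible φ}

variable {F : Type*} [Field F]

theorem hasProd_monicIrreducible_one_sub_inv [CompleteSpace K] {w : monicSubmonoid F →* K}
    (hw : Summable fun f ↦ ‖w f‖) :
    HasProd (fun φ : MonicIrreducible F ↦ (1 - w ⟨φ.1, φ.2.1⟩)⁻¹) (∑' f, w f) := by
  refine hasProd_one_sub_inv_of_pairwise_coprime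
    (p := fun φ : MonicIrreducible F ↦ (⟨φ.1, φ.2.1⟩ : monicSubmonoid F)) ?_ ?_ ?_ hw
  · intro φ ψ hne f hdvd
    rw [monicSubmonoid_dvd_iff] at hdvd ⊢
    refine (φ.2.2.prime.dvd_or_dvd hdvd).resolve_left fun h ↦ hne (Subtype.ext ?_)
    exact eq_of_monic_of_associated φ.2.1 ψ.2.1 (φ.2.2.associated_of_dvd ψ.2.2 h)
  · intro φ h
    exact φ.2.2.not_dvd_one (monicSubmonoid_dvd_iff.1 h)
  · intro f hf
    have not_unit : ¬ IsUnit f.1 := fun h ↦ hf (Subtype.ext (f.2.eq_one_of_isUnit h))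
    obtain ⟨φ, monic, irreducible, dvd⟩ := exists_monic_irreducible_factor f.1 not_unit
    exact ⟨⟨φ, monic, irreducible⟩, monicSubmonoid_dvd_iff.2 dvd⟩

/-- The monic irreducible polynomials other than `X`, which index the product of `stmt_11`. -/
abbrev MonicIrreducibleNeX (F : Type*) [Field F] : Type _ :=
  {φ : F[X] // φ.Monic ∧ Irreducible φ ∧ φ ≠ X}

lemma apply_X_ne_one_of_summable_norm {w : monicSubmonoid F →* K} (hw : Summable fun f ↦ ‖w f‖) :
    w ⟨X, monic_X⟩ ≠ 1 := by
  intro hX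
  have pow_injective : Function.Injective
      fun n : ℕ ↦ (⟨X, monic_X⟩ : monicSubmonoid F) ^ n :=
    fun m n h ↦ by simpa using congrArg (fun f : monicSubmonoid F ↦ f.1.natDegree) h
  have summable_powers := hw.comp_injective pow_injective
  simp [Function.comp_def, hX, summable_const_iff] at summable_powers

theorem hasProd_monicIrreducibleNeX_one_sub_inv [CompleteSpace K] {w : monicSubmonoid F →* K}
    (hw : Summable fun f ↦ ‖w f‖) :
    HasProd (fun φ : MonicIrreducibleNeX F ↦ (1 - w ⟨φ.1, φ.2.1⟩)⁻¹)
      ((1 - w ⟨X, monic_X⟩) * ∑' f, w f) := by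
  classical
  let inclusion : MonicIrreducibleNeX F → MonicIrreducible F := fun φ ↦ ⟨φ.1, φ.2.1, φ.2.2.1⟩
  have inclusion_injective : Function.Injective inclusion :=
    fun _ _ h ↦ Subtype.ext (Subtype.mk.inj h)
  let primeX : MonicIrreducible F := ⟨X, monic_X, irreducible_X⟩
  have without_X := (hasProd_pi_single primeX (1 - w ⟨X, monic_X⟩)).mul
    (hasProd_monicIrreducible_one_sub_inv hw)
  rw [← inclusion_injective.hasProd_iff] at without_X
  · have ne_primeX (φ : MonicIrreducibleNeX F) : inclusion φ ≠ primeX :=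
      fun h ↦ φ.2.2.2 (Subtype.ext_iff.1 h)
    simpa [Function.comp_def, Pi.mulSingle_eq_of_ne, ne_primeX] using without_X
  · intro φ hφ
    obtain rfl : φ = primeX := by
      by_contra h
      exact hφ ⟨⟨φ.1, φ.2.1, φ.2.2, fun hX ↦ h (Subtype.ext hX)⟩, rfl⟩
    simp [primeX, sub_ne_zero.2 (apply_X_ne_one_of_summable_norm hw).symm]

lemma summable_monicIrreducibleNeX_norm_pow [Finite F] {t : K} (ht : Nat.card F * ‖t‖ < 1) :
    Summable fun φ : MonicIrreducibleNeX F ↦ ‖t ^ φ.1.natDegree‖ := by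
  have toMonic_injective : Function.Injective
      fun φ : MonicIrreducibleNeX F ↦ (⟨φ.1, φ.2.1⟩ : monicSubmonoid F) :=
    fun _ _ h ↦ Subtype.ext (Subtype.mk.inj h)
  have restricted := (summable_norm_degreeWeight F ht).comp_injective toMonic_injective
  exact restricted

theorem hasProd_monicIrreducibleNeX_one_sub_pow_inv [Finite F] [CompleteSpace K] {t : K}
    (ht : Nat.card F * ‖t‖ < 1) :
    HasProd (fun φ : MonicIrreducibleNeX F ↦ (1 - t ^ φ.1.natDegree)⁻¹)
      ((1 - t) / (1 - Nat.card F * t)) := by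
  have weight_X : degreeWeight F t ⟨X, monic_X⟩ = t := by simp [degreeWeight]
  have euler := hasProd_monicIrreducibleNeX_one_sub_inv (summable_norm_degreeWeight F ht)
  rwa [weight_X, tsum_degreeWeight F ht, ← div_eq_mul_inv] at euler

end MonicPolynomials

section DoubleProduct

lemma mul_div_pow_succ {G : Type*} [CommGroupWithZero G] {a : G} (ha : a ≠ 0) (b : G) (n : ℕ) :
    a * (b / a ^ (n + 1)) = b / a ^ n := by
  rw [pow_succ', mul_div_assoc', mul_div_mul_left _ _ ha]

variable {K : Type*} [RCLike K] {u : K} {q : ℕ}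

lemma norm_div_natCast_pow_lt_one (hq : q ≠ 0) (hu : ‖u‖ < 1) (r : ℕ) :
    ‖u / (q : K) ^ r‖ < 1 := by
  rw [norm_div, norm_pow, RCLike.norm_natCast]
  refine (div_le_self (norm_nonneg u) (one_le_pow₀ ?_)).trans_lt hu
  exact_mod_cast Nat.one_le_iff_ne_zero.2 hq

lemma natCast_mul_norm_div_pow_succ_lt_one (hq : q ≠ 0) (hu : ‖u‖ < 1) (r : ℕ) :
    q * ‖u / (q : K) ^ (r + 1)‖ < 1 := by
  rw [← RCLike.norm_natCast (K := K), ← norm_mul, mul_div_pow_succ (Nat.cast_ne_zero.2 hq)]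
  exact norm_div_natCast_pow_lt_one hq hu r

lemma tendsto_prod_range_one_sub_div_pow (hq : 1 < q) (hu : ‖u‖ < 1) :
    Tendsto (fun n ↦ ∏ r ∈ range n,
        (1 - u / (q : K) ^ (r + 1)) / (1 - q * (u / (q : K) ^ (r + 1))))
      atTop (𝓝 (1 / (1 - u))) := by
  have q_ne_zero : q ≠ 0 := by lia
  have norm_inv_lt_one : ‖(q : K)⁻¹‖ < 1 := by
    rw [norm_inv, RCLike.norm_natCast]
    exact inv_lt_one_of_one_lt₀ (by exact_mod_cast hq)
  have ne_zero (n : ℕ) : 1 - u / (q : K) ^ n ≠ 0 := by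
    refine sub_ne_zero.2 fun h ↦ (norm_div_natCast_pow_lt_one q_ne_zero hu n).ne ?_
    rw [← h, norm_one]
  have tendsto_one : Tendsto (fun n ↦ 1 - u / (q : K) ^ n) atTop (𝓝 1) := by
    simpa [div_eq_mul_inv] using
      ((tendsto_pow_atTop_nhds_zero_of_norm_lt_one norm_inv_lt_one).const_mul u).const_sub 1
  simpa [mul_div_pow_succ (Nat.cast_ne_zero (R := K).2 q_ne_zero)] using
    tendsto_prod_range_succ_div ne_zero tendsto_one

lemma norm_div_pow_succ_pow_le (hq : q ≠ 0) (r : ℕ) {d : ℕ} (hd : d ≠ 0) :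
    ‖(u / (q : K) ^ (r + 1)) ^ d‖ ≤ ‖(u / q) ^ d‖ * (q : ℝ)⁻¹ ^ r := by
  have inv_le_one : (q : ℝ)⁻¹ ≤ 1 :=
    inv_le_one_of_one_le₀ (by exact_mod_cast Nat.one_le_iff_ne_zero.2 hq)
  calc ‖(u / (q : K) ^ (r + 1)) ^ d‖
      = ‖(u / q) ^ d‖ * ((q : ℝ)⁻¹ ^ r) ^ d := by
        rw [pow_succ', ← div_div, div_eq_mul_inv (u / _), mul_pow, norm_mul, norm_pow _⁻¹,
          norm_inv, norm_pow (q : K), RCLike.norm_natCast]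
        simp only [inv_pow]
    _ ≤ ‖(u / q) ^ d‖ * (q : ℝ)⁻¹ ^ r := by
        gcongr
        exact pow_le_of_le_one (by positivity) (pow_le_one₀ (by positivity) inv_le_one) hd

lemma summable_monicIrreducibleNeX_prod_norm_div_pow (F : Type*) [Field F] [Finite F]
    (hu : ‖u‖ < 1) :
    Summable fun x : MonicIrreducibleNeX F × ℕ ↦
      ‖(u / (Nat.card F : K) ^ (x.2 + 1)) ^ x.1.1.natDegree‖ := by
  have card_ne_zero : Nat.card F ≠ 0 := Nat.card_pos.ne'
  have summable_primes : Summable fun φ : MonicIrreducibleNeX F ↦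
      ‖(u / Nat.card F) ^ φ.1.natDegree‖ :=
    summable_monicIrreducibleNeX_norm_pow (by
      simpa using natCast_mul_norm_div_pow_succ_lt_one card_ne_zero hu 0)
  have summable_exponents : Summable fun r : ℕ ↦ (Nat.card F : ℝ)⁻¹ ^ r :=
    summable_geometric_of_lt_one (by positivity)
      (inv_lt_one_of_one_lt₀ (by exact_mod_cast Finite.one_lt_card))
  have summable_bound := summable_primes.mul_of_nonneg summable_exponents
    (fun _ ↦ norm_nonneg _) (fun _ ↦ by positivity)
  exact summable_bound.of_nonneg_of_le (fun _ ↦ norm_nonneg _) fun ⟨φ, r⟩ ↦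
    norm_div_pow_succ_pow_le card_ne_zero r φ.2.2.1.natDegree_pos.ne'

end DoubleProduct

theorem stmt_11_general {F K : Type*} [Field F] [Finite F] [RCLike K] {u : K} (hu : ‖u‖ < 1) :
    (∀ φ : {φ : F[X] // φ.Monic ∧ Irreducible φ ∧ φ ≠ X},
      Multipliable fun r : ℕ ↦
        (1 - u ^ φ.1.natDegree * ((Nat.card F : K) ^ ((r + 1) * φ.1.natDegree))⁻¹)⁻¹) ∧
    HasProd (fun φ : {φ : F[X] // φ.Monic ∧ Irreducible φ ∧ φ ≠ X} ↦
        ∏' r : ℕ, (1 - u ^ φ.1.natDegree * ((Nat.card F : K) ^ ((r + 1) * φ.1.natDegree))⁻¹)⁻¹)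
      (1 / (1 - u)) := by
  have as_pow (r d : ℕ) : u ^ d * ((Nat.card F : K) ^ ((r + 1) * d))⁻¹ =
      (u / (Nat.card F : K) ^ (r + 1)) ^ d := by
    rw [div_pow, ← pow_mul, div_eq_mul_inv]
  simp only [as_pow]
  have summable := summable_monicIrreducibleNeX_prod_norm_div_pow F hu
  have multipliable_rows (φ : MonicIrreducibleNeX F) :
      Multipliable fun r : ℕ ↦ (1 - (u / (Nat.card F : K) ^ (r + 1)) ^ φ.1.natDegree)⁻¹ :=
    have summable_row := summable.comp_injective (Prod.mk_right_injective φ)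
    multipliable_one_sub_inv_of_summable_norm summable_row
  have hasProd_columns (r : ℕ) := hasProd_monicIrreducibleNeX_one_sub_pow_inv (F := F)
    (natCast_mul_norm_div_pow_succ_lt_one Nat.card_pos.ne' hu r)
  exact ⟨multipliable_rows, hasProd_tprod_of_tendsto_prod_range
    (multipliable_one_sub_inv_of_summable_norm summable) multipliable_rows hasProd_columns
    (tendsto_prod_range_one_sub_div_pow Finite.one_lt_card hu)⟩

/-- For a prime power `q`, the finite field `F` with `q` elements, and `0 < u < 1`:
the product over all monic irreducible `φ ∈ F[X]`, `φ ≠ X`, of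
`∏_{r=1}^∞ 1/(1 − u^{deg φ} q^{−r·deg φ})` converges and equals `1/(1−u)`. -/
theorem stmt_11 (q : ℕ) (hq : IsPrimePow q) (F : Type) [Field F] [Fintype F]
    (hF : Fintype.card F = q) (u : ℝ) (hu0 : 0 < u) (hu1 : u < 1) :
    (∀ φ : {φ : Polynomial F // φ.Monic ∧ Irreducible φ ∧ φ ≠ Polynomial.X},
      Multipliable (fun r : ℕ =>
        (1 - u ^ φ.1.natDegree * ((q : ℝ) ^ ((r + 1) * φ.1.natDegree))⁻¹)⁻¹)) ∧
    HasProd (fun φ : {φ : Polynomial F // φ.Monic ∧ Irreducible φ ∧ φ ≠ Polynomial.X} =>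
        ∏' r : ℕ, (1 - u ^ φ.1.natDegree * ((q : ℝ) ^ ((r + 1) * φ.1.natDegree))⁻¹)⁻¹)
      (1 / (1 - u)) := by
  obtain rfl : Nat.card F = q := Nat.card_eq_fintype_card.trans hF
  exact stmt_11_general (by rwa [Real.norm_of_nonneg hu0.le])
end

section
/- Let λ ⊆ Λ be partitions such that Λ − λ is a horizontal strip (the Young diagram of Λ contains that of λ and their difference has at most one cell in each column). Say a column a is 'in the strip' if Λ − λ contains a cell in column a. Let A be the set of columns a ≥ 2 that are in the strip such that column a−1 is not in the strip, and let A' be the set of columns a in the strip such that either a = 1 or column a−1 is also in the strip. Then for every real number t, t^{n(Λ) − n(λ)} · ∏_{a ∈ A} (1 − t^{λ'_{a−1} − λ'_a}) = ∏_{a ∈ A'} t^{λ'_a} · ∏_{a ∈ A} ( t^{λ'_a} − t^{λ'_{a−1}} ). -/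
/-- Column `j` (0-indexed) is in the strip `Λ − λ`. -/
def InStrip (lam Lam : YoungDiagram) (j : ℕ) : Prop :=
  ∃ i : ℕ, (i, j) ∈ Lam ∧ (i, j) ∉ lam

/-!
When `Λ − λ` is a horizontal strip, its cell in a column `a` sits directly below column `a` of `λ`,
so its 0-indexed row is `λ'_a`. Hence `n(Λ) − n(λ)` is the sum of `λ'_a` over the columns `a` of the
strip, and `t ^ (n(Λ) − n(λ))` splits into a factor `t ^ λ'_a` for each of them. The factors with
`a ∈ A'` stay as they are, and those with `a ∈ A` are absorbed through
`t ^ λ'_a * (1 - t ^ (λ'_{a-1} - λ'_a)) = t ^ λ'_a - t ^ λ'_{a-1}`.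
-/

theorem pow_mul_one_sub_pow_sub {R : Type*} [Ring R] (t : R) {m n : ℕ} (hmn : m ≤ n) :
    t ^ m * (1 - t ^ (n - m)) = t ^ m - t ^ n := by
  rw [mul_sub, mul_one, pow_mul_pow_sub t hmn]

theorem pow_sum_mul_prod_filter_not_one_sub_pow_sub {ι R : Type*} [CommRing R] (t : R)
    (s : Finset ι) (p : ι → Prop) [DecidablePred p] {a b : ι → ℕ}
    (hab : ∀ i ∈ s, ¬p i → a i ≤ b i) :
    t ^ (∑ i ∈ s, a i) * ∏ i ∈ s with ¬p i, (1 - t ^ (b i - a i)) =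
      (∏ i ∈ s with p i, t ^ a i) * ∏ i ∈ s with ¬p i, (t ^ a i - t ^ b i) := by
  have absorb : ∀ i ∈ s.filter (¬p ·), t ^ a i * (1 - t ^ (b i - a i)) = t ^ a i - t ^ b i := by
    intro i hi
    obtain ⟨his, hpi⟩ := Finset.mem_filter.mp hi
    exact pow_mul_one_sub_pow_sub t (hab i his hpi)
  rw [← Finset.prod_pow_eq_pow_sum, ← Finset.prod_filter_mul_prod_filter_not s p, mul_assoc,
    ← Finset.prod_mul_distrib, Finset.prod_congr rfl absorb]

theorem injOn_of_card_fiber_le_one {α β : Type*} [DecidableEq β] {s : Finset α} {f : α → β}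
    (hcard : ∀ b, (s.filter (f · = b)).card ≤ 1) : Set.InjOn f s := by
  intro x hx y hy hxy
  exact Finset.card_le_one.mp (hcard (f y)) x (Finset.mem_filter.mpr ⟨hx, hxy⟩) y
    (Finset.mem_filter.mpr ⟨hy, rfl⟩)

section SkewDiagram

/-- The cells of the skew diagram `Λ − λ`, with the smaller diagram as the first argument, as in
`InStrip`. -/
abbrev skewCells (lam Lam : YoungDiagram) : Finset (ℕ × ℕ) :=
  Lam.cells \ lam.cells

/-- The columns of the skew diagram `Λ − λ`, as a finite set: the finset form of `InStrip`. -/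
def stripColumns (lam Lam : YoungDiagram) : Finset ℕ :=
  (skewCells lam Lam).image Prod.snd

variable {lam Lam : YoungDiagram}

theorem mem_stripColumns {j : ℕ} : j ∈ stripColumns lam Lam ↔ InStrip lam Lam j := by
  simp [stripColumns, InStrip]

theorem nstat_sub_nstat_eq_sum_fst (hsub : lam ≤ Lam) :
    nstat Lam - nstat lam = ∑ c ∈ skewCells lam Lam, c.1 :=
  Nat.sub_eq_of_eq_add (Finset.sum_sdiff hsub).symm

theorem fst_eq_colLen_of_mem_skewCells
    (hinj : Set.InjOn Prod.snd (skewCells lam Lam : Set (ℕ × ℕ)))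
    {c : ℕ × ℕ} (hc : c ∈ skewCells lam Lam) : c.1 = lam.colLen c.2 := by
  obtain ⟨hcLam, hclam⟩ := Finset.mem_sdiff.mp hc
  have colLen_le : lam.colLen c.2 ≤ c.1 := by
    rwa [YoungDiagram.mem_cells, YoungDiagram.mem_iff_lt_colLen, not_lt] at hclam
  have foot_mem : (lam.colLen c.2, c.2) ∈ skewCells lam Lam := by
    refine Finset.mem_sdiff.mpr ⟨Lam.up_left_mem colLen_le le_rfl hcLam, ?_⟩
    rw [YoungDiagram.mem_cells, YoungDiagram.mem_iff_lt_colLen]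
    exact lt_irrefl _
  exact congrArg Prod.fst (hinj hc foot_mem rfl)

theorem nstat_sub_nstat_eq_sum_colLen (hsub : lam ≤ Lam)
    (hinj : Set.InjOn Prod.snd (skewCells lam Lam : Set (ℕ × ℕ))) :
    nstat Lam - nstat lam = ∑ j ∈ stripColumns lam Lam, lam.colLen j := by
  rw [nstat_sub_nstat_eq_sum_fst hsub, stripColumns, Finset.sum_image hinj]
  exact Finset.sum_congr rfl fun c hc => fst_eq_colLen_of_mem_skewCells hinj hc

end SkewDiagram

theorem stmt_12_general {R : Type*} [CommRing R] (lam Lam : YoungDiagram) (hsub : lam ≤ Lam)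
    (hstrip : ∀ j : ℕ, ((Lam.cells \ lam.cells).filter (fun s => s.2 = j)).card ≤ 1)
    (t : R) :
    t ^ (nstat Lam - nstat lam) *
        ∏ᶠ (j : ℕ) (_ : 1 ≤ j ∧ InStrip lam Lam j ∧ ¬InStrip lam Lam (j - 1)),
          (1 - t ^ (lam.colLen (j - 1) - lam.colLen j)) =
      (∏ᶠ (j : ℕ) (_ : InStrip lam Lam j ∧ (j = 0 ∨ InStrip lam Lam (j - 1))),
          t ^ lam.colLen j) *
        ∏ᶠ (j : ℕ) (_ : 1 ≤ j ∧ InStrip lam Lam j ∧ ¬InStrip lam Lam (j - 1)),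
          (t ^ lam.colLen j - t ^ lam.colLen (j - 1)) := by
  classical
  let p : ℕ → Prop := fun j => j = 0 ∨ InStrip lam Lam (j - 1)
  have mem_A' (j : ℕ) : (InStrip lam Lam j ∧ (j = 0 ∨ InStrip lam Lam (j - 1))) ↔
      j ∈ (stripColumns lam Lam).filter p := by
    rw [Finset.mem_filter, mem_stripColumns]
  have mem_A (j : ℕ) : (1 ≤ j ∧ InStrip lam Lam j ∧ ¬InStrip lam Lam (j - 1)) ↔
      j ∈ (stripColumns lam Lam).filter (¬p ·) := by
    rw [Finset.mem_filter, mem_stripColumns, not_or, Nat.one_le_iff_ne_zero, and_left_comm]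
  rw [finprod_cond_eq_prod_of_cond_iff _ fun _ => mem_A _,
    finprod_cond_eq_prod_of_cond_iff _ fun _ => mem_A' _,
    finprod_cond_eq_prod_of_cond_iff _ fun _ => mem_A _,
    nstat_sub_nstat_eq_sum_colLen hsub (injOn_of_card_fiber_le_one hstrip)]
  exact pow_sum_mul_prod_filter_not_one_sub_pow_sub t _ p
    fun j _ _ => lam.colLen_anti _ _ (Nat.sub_le j 1)

/-- Let `λ ⊆ Λ` with `Λ − λ` a horizontal strip.  With `A` the set of columns `a ≥ 2` in
the strip whose previous column is not in the strip, and `A'` the set of columns `a` in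
the strip with `a = 1` or column `a−1` also in the strip (here columns are 0-indexed in
Lean, so `a ≥ 2` becomes `1 ≤ j` and `a = 1` becomes `j = 0`, and `λ'_a = colLen (a−1)`
becomes `colLen j`):
`t^{n(Λ)−n(λ)} ∏_{a∈A} (1 − t^{λ'_{a−1}−λ'_a}) = ∏_{a∈A'} t^{λ'_a} ∏_{a∈A} (t^{λ'_a} − t^{λ'_{a−1}})`. -/
theorem stmt_12 (lam Lam : YoungDiagram) (hsub : lam ≤ Lam)
    (hstrip : ∀ j : ℕ, ((Lam.cells \ lam.cells).filter (fun s => s.2 = j)).card ≤ 1)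
    (t : ℝ) :
    t ^ (nstat Lam - nstat lam) *
        ∏ᶠ (j : ℕ) (_ : 1 ≤ j ∧ InStrip lam Lam j ∧ ¬InStrip lam Lam (j - 1)),
          (1 - t ^ (lam.colLen (j - 1) - lam.colLen j)) =
      (∏ᶠ (j : ℕ) (_ : InStrip lam Lam j ∧ (j = 0 ∨ InStrip lam Lam (j - 1))),
          t ^ lam.colLen j) *
        ∏ᶠ (j : ℕ) (_ : 1 ≤ j ∧ InStrip lam Lam j ∧ ¬InStrip lam Lam (j - 1)),
          (t ^ lam.colLen j - t ^ lam.colLen (j - 1)) :=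
  stmt_12_general lam Lam hsub hstrip t
end

section
/- Let q be a real number with q > 1, let u be a real number with 0 < u < 1, and let N be a nonnegative integer. Writing (x)_M = ∏_{r=0}^{M−1} (1 − x·q^{−r}), one has ∑_λ u^{|λ|} / ( (1/q)_{N − λ'_1} · ∏_{i≥1} q^{(λ'_i)²} (1/q)_{m_i(λ)} ) = 1 / ( (u/q)_N · (1/q)_N ), where the sum is over all partitions λ with at most N parts (λ'_1 ≤ N). -/
/-- `(x)_M = (1−x)(1−x/q)⋯(1−x/q^{M−1})`, with `(x)_0 = 1`. -/
noncomputable def poch (q x : ℝ) (M : ℕ) : ℝ := ∏ r ∈ Finset.range M, (1 - x / q ^ r)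

/-- `∏_{i≥1} q^{(λ'_i)²} (1/q)_{m_i(λ)}`, where `λ'_{i}` is the conjugate partition
(`λ'_{i+1} = colLen i`, 0-indexed) and `m_{i+1} = colLen i − colLen (i+1)`. -/
noncomputable def denomProd (q : ℝ) (μ : YoungDiagram) : ℝ :=
  ∏ᶠ i : ℕ, q ^ (μ.colLen i ^ 2) * poch q q⁻¹ (μ.colLen i - μ.colLen (i + 1))

/-!
Write `t = q⁻¹`. Removing the first column, of length `k`, from a partition with at most `N` parts
leaves an arbitrary partition with at most `k` parts and divides its weight by
`u ^ k * t ^ (k ^ 2) / (t)_{N - k}`, so the sums `S N` satisfy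
`S N = ∑_{k ≤ N} u ^ k * t ^ (k ^ 2) / (t)_{N - k} * S k`.
The term `k = N` is self-referential: stripping all columns of length `N` one after the other turns
it into a geometric series of ratio `u ^ N * t ^ (N ^ 2)`, which expresses `S N` through the `S k`
with `k < N` and gives convergence at the same time. That `1 / ((u / q)_N (t)_N)` satisfies the same
recursion is a `q`-Vandermonde identity, proved by a Pascal-type recursion in `N` after introducing
a shift `a`.
-/

open Finset Function

section Iterate

variable {X 𝕜 : Type*} [RCLike 𝕜] {f : X → 𝕜} {g : X → X} {r a : 𝕜}

lemma bijective_iterate_compl_range (size : X → ℕ) (hg : Injective g)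
    (hsize : ∀ x, size x < size (g x)) :
    Bijective (fun p : ℕ × ↥(Set.range g)ᶜ => g^[p.1] p.2) := by
  constructor
  · have le_of_eq {n m : ℕ} {x y : ↥(Set.range g)ᶜ} (h : g^[n] x = g^[m] y) : m ≤ n := by
      by_contra! hnm
      obtain ⟨d, rfl⟩ := Nat.exists_eq_add_of_lt hnm
      rw [add_assoc, iterate_add_apply, (hg.iterate n).eq_iff, iterate_succ_apply'] at h
      exact x.2 ⟨_, h.symm⟩
    rintro ⟨n, x⟩ ⟨m, y⟩ h
    obtain rfl : n = m := (le_of_eq h.symm).antisymm (le_of_eq h)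
    exact Prod.ext rfl (Subtype.ext (hg.iterate n h))
  · intro x
    induction hx : size x using Nat.strong_induction_on generalizing x with
    | _ s ih =>
      by_cases hxg : x ∈ Set.range g
      · obtain ⟨y, rfl⟩ := hxg
        obtain ⟨⟨n, z⟩, rfl⟩ := ih (size y) (hx ▸ hsize y) y rfl
        exact ⟨(n + 1, z), iterate_succ_apply' g n z⟩
      · exact ⟨(0, ⟨x, hxg⟩), rfl⟩

lemma hasSum_geometric_mul (hr : ‖r‖ < 1) (hf : HasSum f a) :
    HasSum (fun p : ℕ × X => r ^ p.1 * f p.2) ((1 - r)⁻¹ * a) :=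
  (hasSum_geometric_of_norm_lt_one hr).mul hf <|
    summable_mul_of_summable_norm (summable_norm_geometric_of_norm_lt_one hr) hf.summable.norm

lemma hasSum_of_map_eq_mul (size : X → ℕ) (hg : Injective g) (hsize : ∀ x, size x < size (g x))
    (hr : ‖r‖ < 1) (hfg : ∀ x, f (g x) = r * f x) (hf : HasSum (fun x : ↥(Set.range g)ᶜ => f x) a) :
    HasSum f ((1 - r)⁻¹ * a) := by
  have f_iterate (n : ℕ) (x : X) : f (g^[n] x) = r ^ n * f x := by
    induction n with
    | zero => simp
    | succ n ih => rw [iterate_succ_apply', hfg, ih, pow_succ', mul_assoc]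
  have hasSum_product := hasSum_geometric_mul hr hf
  simp only [← f_iterate] at hasSum_product
  exact (Equiv.ofBijective _ (bijective_iterate_compl_range size hg hsize)).hasSum_iff.1
    hasSum_product

end Iterate

section Pochhammer

variable {q u x : ℝ}

lemma poch_zero (q x : ℝ) : poch q x 0 = 1 := prod_range_zero _

lemma poch_div_succ (q x : ℝ) (n : ℕ) :
    poch q (x / q) (n + 1) = poch q (x / q) n * (1 - x * q⁻¹ ^ (n + 1)) := by
  rw [poch, prod_range_succ, ← poch]
  ring

lemma poch_inv_succ (q : ℝ) (n : ℕ) :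
    poch q q⁻¹ (n + 1) = poch q q⁻¹ n * (1 - q⁻¹ ^ (n + 1)) := by
  simpa using poch_div_succ q 1 n

lemma poch_ne_zero (hq : 1 ≤ |q|) (hx : |x| < 1) (n : ℕ) : poch q x n ≠ 0 := by
  refine prod_ne_zero_iff.2 fun r _ => sub_ne_zero.2 fun h => ?_
  have : |x / q ^ r| < 1 := by
    rw [abs_div, abs_pow]
    exact (div_le_self (abs_nonneg x) (one_le_pow₀ hq)).trans_lt hx
  simp [← h] at this

/-- The summand with `i + j = N` of a `q`-Vandermonde identity, to be summed over the antidiagonal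
of `N`. The shift `a`, equal to `0` in the application, is what the induction on `N` varies. -/
noncomputable def vandermondeTerm (q u : ℝ) (a i j : ℕ) : ℝ :=
  u ^ i * q⁻¹ ^ (i * (i + a)) / (poch q q⁻¹ i * poch q q⁻¹ j * poch q (u / q) (i + a))

lemma vandermondeTerm_succ_right (hq : ∀ n, poch q q⁻¹ n ≠ 0) (a i j : ℕ) :
    (1 - q⁻¹ ^ (j + 1)) * vandermondeTerm q u a i (j + 1) = vandermondeTerm q u a i j := by
  have factor_ne_zero : 1 - q⁻¹ ^ (j + 1) ≠ 0 :=
    right_ne_zero_of_mul (poch_inv_succ q j ▸ hq (j + 1))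
  simp only [vandermondeTerm, poch_inv_succ]
  generalize q⁻¹ = t at *
  field_simp

lemma vandermondeTerm_succ_left (hq : ∀ n, poch q q⁻¹ n ≠ 0) (a i j : ℕ) :
    q⁻¹ ^ j * (1 - q⁻¹ ^ (i + 1)) * vandermondeTerm q u a (i + 1) j =
      u * q⁻¹ ^ (i + j + a + 1) * vandermondeTerm q u (a + 1) i j := by
  have factor_ne_zero : 1 - q⁻¹ ^ (i + 1) ≠ 0 :=
    right_ne_zero_of_mul (poch_inv_succ q i ▸ hq (i + 1))
  have exponents : q⁻¹ ^ j * q⁻¹ ^ ((i + 1) * (i + (a + 1))) =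
      q⁻¹ ^ (i + j + a + 1) * q⁻¹ ^ (i * (i + (a + 1))) := by
    rw [← pow_add, ← pow_add]
    ring_nf
  simp only [vandermondeTerm, poch_inv_succ, show i + 1 + a = i + (a + 1) by ring]
  generalize q⁻¹ = t at *
  field_simp
  linear_combination
    u ^ (i + 1) / (poch q t i * poch q t j * poch q (u / q) (i + (a + 1))) * exponents

lemma sum_vandermondeTerm_succ (hq : ∀ n, poch q q⁻¹ n ≠ 0) (N a : ℕ) :
    (1 - q⁻¹ ^ (N + 1)) * ∑ p ∈ antidiagonal (N + 1), vandermondeTerm q u a p.1 p.2 =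
      ∑ p ∈ antidiagonal N, vandermondeTerm q u a p.1 p.2 +
        u * q⁻¹ ^ (N + a + 1) * ∑ p ∈ antidiagonal N, vandermondeTerm q u (a + 1) p.1 p.2 := by
  have split : ∀ p ∈ antidiagonal (N + 1),
      (1 - q⁻¹ ^ (N + 1)) * vandermondeTerm q u a p.1 p.2 =
        (1 - q⁻¹ ^ p.2) * vandermondeTerm q u a p.1 p.2 +
          q⁻¹ ^ p.2 * (1 - q⁻¹ ^ p.1) * vandermondeTerm q u a p.1 p.2 := by
    intro p hp
    rw [← mem_antidiagonal.1 hp, pow_add]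
    ring
  rw [mul_sum, sum_congr rfl split, sum_add_distrib, Nat.sum_antidiagonal_succ',
    Nat.sum_antidiagonal_succ, mul_sum]
  simp only [pow_zero, sub_self, zero_mul, mul_zero, zero_add, vandermondeTerm_succ_right hq,
    vandermondeTerm_succ_left hq]
  congr 1
  refine sum_congr rfl fun p hp => ?_
  rw [mem_antidiagonal.1 hp]

theorem sum_vandermondeTerm (hq : ∀ n, poch q q⁻¹ n ≠ 0) (hu : ∀ n, poch q (u / q) n ≠ 0)
    (N a : ℕ) :
    ∑ p ∈ antidiagonal N, vandermondeTerm q u a p.1 p.2 =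
      1 / (poch q q⁻¹ N * poch q (u / q) (N + a)) := by
  induction N generalizing a with
  | zero => simp [vandermondeTerm, poch_zero]
  | succ N ih =>
    have t_factor_ne_zero := right_ne_zero_of_mul (poch_inv_succ q N ▸ hq (N + 1))
    have u_factor_ne_zero := right_ne_zero_of_mul (poch_div_succ q u (N + a) ▸ hu (N + a + 1))
    apply mul_left_cancel₀ t_factor_ne_zero
    rw [sum_vandermondeTerm_succ hq, ih, ih, show N + 1 + a = N + a + 1 by ring, ← add_assoc,
      poch_inv_succ, poch_div_succ]
    have := hq N
    have := hu (N + a)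
    generalize q⁻¹ = t at *
    field_simp
    ring

end Pochhammer

section Weights

variable {q u : ℝ}

/-- The factor by which a first column of length `k` multiplies the weight of a partition,
among partitions with at most `N` parts. -/
noncomputable def columnWeight (q u : ℝ) (N k : ℕ) : ℝ :=
  u ^ k / (poch q q⁻¹ (N - k) * q ^ (k ^ 2))

/-- The weight of the partition `μ` in the sum over partitions with at most `N` parts. -/
noncomputable def diagramWeight (q u : ℝ) (N : ℕ) (μ : YoungDiagram) : ℝ :=
  u ^ μ.card / (poch q q⁻¹ (N - μ.colLen 0) * denomProd q μ)

/-- The closed form of the sum over partitions with at most `N` parts. -/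
noncomputable def totalWeight (q u : ℝ) (N : ℕ) : ℝ :=
  1 / (poch q (u / q) N * poch q q⁻¹ N)

lemma sum_columnWeight_mul_totalWeight (hq : ∀ n, poch q q⁻¹ n ≠ 0)
    (hu : ∀ n, poch q (u / q) n ≠ 0) (N : ℕ) :
    ∑ k ∈ range (N + 1), columnWeight q u N k * totalWeight q u k = totalWeight q u N := by
  have vandermonde := sum_vandermondeTerm hq hu N 0
  rw [Nat.sum_antidiagonal_eq_sum_range_succ (vandermondeTerm q u 0)] at vandermonde
  rw [totalWeight, mul_comm (poch q (u / q) N)]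
  refine Eq.trans (sum_congr rfl fun k _ => ?_) vandermonde
  rw [columnWeight, totalWeight, vandermondeTerm, add_zero, inv_pow, ← sq]
  ring

lemma abs_columnWeight_self_lt_one (hq : 1 ≤ |q|) (hu : |u| < |q|) {N : ℕ} (hN : N ≠ 0) :
    |columnWeight q u N N| < 1 := by
  rw [columnWeight, Nat.sub_self, poch_zero, one_mul, abs_div, abs_pow, abs_pow,
    div_lt_one (by positivity)]
  calc |u| ^ N < |q| ^ N := pow_lt_pow_left₀ hu (abs_nonneg u) hN
    _ ≤ |q| ^ N ^ 2 := pow_le_pow_right₀ hq (Nat.le_self_pow two_ne_zero N)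

lemma totalWeight_eq_inv_mul_sum (hq : 1 < |q|) (hu : |u| < |q|) {N : ℕ} (hN : N ≠ 0) :
    totalWeight q u N = (1 - columnWeight q u N N)⁻¹ *
      ∑ k ∈ range N, columnWeight q u N k * totalWeight q u k := by
  have abs_inv_lt_one : |q⁻¹| < 1 := abs_inv q ▸ inv_lt_one_of_one_lt₀ hq
  have abs_div_lt_one : |u / q| < 1 := by rwa [abs_div, div_lt_one (by positivity)]
  have one_sub_ne_zero : 1 - columnWeight q u N N ≠ 0 :=
    sub_ne_zero.2 (lt_of_abs_lt (abs_columnWeight_self_lt_one hq.le hu hN)).ne'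
  have recursion := sum_columnWeight_mul_totalWeight (poch_ne_zero hq.le abs_inv_lt_one)
    (poch_ne_zero hq.le abs_div_lt_one) N
  rw [sum_range_succ] at recursion
  rw [eq_inv_mul_iff_mul_eq₀ one_sub_ne_zero]
  linear_combination -recursion

end Weights

section Columns

/-- Partitions with at most `N` parts: the length of the first column is the number of parts. -/
abbrev BoundedDiagram (N : ℕ) : Type := {μ : YoungDiagram // μ.colLen 0 ≤ N}

lemma eq_of_colLen_eq {μ ν : YoungDiagram} (h : ∀ j, μ.colLen j = ν.colLen j) : μ = ν := by
  ext ⟨i, j⟩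
  simp only [YoungDiagram.mem_cells, YoungDiagram.mem_iff_lt_colLen, h]

lemma colLen_eq_of_mem_iff {μ : YoungDiagram} {j n : ℕ} (h : ∀ i, (i, j) ∈ μ ↔ i < n) :
    μ.colLen j = n :=
  eq_of_forall_lt_iff fun i => by rw [← YoungDiagram.mem_iff_lt_colLen, h]

lemma colLen_rowLen_zero (μ : YoungDiagram) : μ.colLen (μ.rowLen 0) = 0 := by
  refine Nat.eq_zero_of_not_pos fun h => ?_
  rw [← YoungDiagram.mem_iff_lt_colLen, YoungDiagram.mem_iff_lt_rowLen] at h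
  exact lt_irrefl _ h

/-- The Young diagram obtained from `μ` by inserting a new first column of length `k`. -/
def prependColumn {k : ℕ} (μ : BoundedDiagram k) : YoungDiagram where
  cells := range k ×ˢ {0} ∪ μ.1.cells.image (Prod.map id Nat.succ)
  isLowerSet := by
    rintro ⟨i, _ | j⟩ ⟨i', _ | j'⟩ hle h
    · have hi : i < k := by simpa using h
      simpa using hle.1.trans_lt hi
    · exact (Nat.not_succ_le_zero j' hle.2).elim
    · have hi : i < μ.1.colLen j := by
        simpa [YoungDiagram.mem_iff_lt_colLen] using h
      have colLen_le : μ.1.colLen j ≤ k := (μ.1.colLen_anti 0 j j.zero_le).trans μ.2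
      simpa using hle.1.trans_lt (hi.trans_le colLen_le)
    · have mem : (i, j) ∈ μ.1 := by simpa using h
      simpa using μ.1.up_left_mem hle.1 (Nat.le_of_succ_le_succ hle.2) mem

/-- The Young diagram obtained from `μ` by deleting its first column. -/
noncomputable def removeFirstColumn (μ : YoungDiagram) : YoungDiagram where
  cells := μ.cells.preimage (Prod.map id Nat.succ)
    (injective_id.prodMap Nat.succ_injective).injOn
  isLowerSet := by
    rintro ⟨i, j⟩ ⟨i', j'⟩ hle h
    simp only [mem_coe, mem_preimage, Prod.map_apply] at h ⊢
    exact μ.up_left_mem hle.1 (Nat.succ_le_succ hle.2) h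

variable {k N : ℕ}

lemma mem_prependColumn_zero (μ : BoundedDiagram k) (i : ℕ) :
    (i, 0) ∈ prependColumn μ ↔ i < k := by
  simp [← YoungDiagram.mem_cells, prependColumn]

lemma mem_prependColumn_succ (μ : BoundedDiagram k) (i j : ℕ) :
    (i, j + 1) ∈ prependColumn μ ↔ (i, j) ∈ μ.1 := by
  simp [← YoungDiagram.mem_cells, prependColumn]

lemma colLen_prependColumn_zero (μ : BoundedDiagram k) : (prependColumn μ).colLen 0 = k :=
  colLen_eq_of_mem_iff (mem_prependColumn_zero μ)

lemma colLen_prependColumn_succ (μ : BoundedDiagram k) (j : ℕ) :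
    (prependColumn μ).colLen (j + 1) = μ.1.colLen j :=
  colLen_eq_of_mem_iff fun i => by
    rw [mem_prependColumn_succ, YoungDiagram.mem_iff_lt_colLen]

lemma colLen_removeFirstColumn (μ : YoungDiagram) (j : ℕ) :
    (removeFirstColumn μ).colLen j = μ.colLen (j + 1) :=
  colLen_eq_of_mem_iff fun i => by
    rw [← YoungDiagram.mem_iff_lt_colLen, ← YoungDiagram.mem_cells]
    simp [removeFirstColumn]

lemma card_prependColumn (μ : BoundedDiagram k) : (prependColumn μ).card = k + μ.1.card := by
  have columns_disjoint :
      Disjoint (range k ×ˢ {0}) (μ.1.cells.image (Prod.map id Nat.succ)) := by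
    simp [disjoint_left]
  rw [YoungDiagram.card, prependColumn, card_union_of_disjoint columns_disjoint, card_product,
    card_range, card_singleton, mul_one,
    card_image_of_injective _ (injective_id.prodMap Nat.succ_injective)]

lemma denomProd_eq_prod_range (q : ℝ) {μ : YoungDiagram} {n : ℕ} (hn : μ.colLen n = 0) :
    denomProd q μ =
      ∏ i ∈ range n, q ^ μ.colLen i ^ 2 * poch q q⁻¹ (μ.colLen i - μ.colLen (i + 1)) := by
  refine finprod_eq_prod_of_mulSupport_subset _ fun i hi => ?_
  by_contra hni
  have colLen_eq_zero : μ.colLen i = 0 :=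
    Nat.eq_zero_of_le_zero (hn ▸ μ.colLen_anti n i (by simpa using hni))
  simp [colLen_eq_zero, poch_zero] at hi

lemma denomProd_prependColumn (q : ℝ) (μ : BoundedDiagram k) :
    denomProd q (prependColumn μ) =
      q ^ k ^ 2 * poch q q⁻¹ (k - μ.1.colLen 0) * denomProd q μ.1 := by
  have hn := colLen_rowLen_zero μ.1
  rw [denomProd_eq_prod_range q hn,
    denomProd_eq_prod_range q ((colLen_prependColumn_succ μ _).trans hn), prod_range_succ']
  simp only [colLen_prependColumn_succ, colLen_prependColumn_zero]
  ring

lemma diagramWeight_prependColumn (q u : ℝ) (N : ℕ) (μ : BoundedDiagram k) :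
    diagramWeight q u N (prependColumn μ) = columnWeight q u N k * diagramWeight q u k μ.1 := by
  simp only [diagramWeight, columnWeight, card_prependColumn, colLen_prependColumn_zero,
    denomProd_prependColumn]
  ring

/-- `prependColumn` as a map into the partitions with at most `N` parts, for `k ≤ N`. -/
def prependColumnOfLE (hkN : k ≤ N) (μ : BoundedDiagram k) : BoundedDiagram N :=
  ⟨prependColumn μ, (colLen_prependColumn_zero μ).trans_le hkN⟩

lemma prependColumnOfLE_injective (hkN : k ≤ N) : Injective (prependColumnOfLE hkN) := by
  intro μ ν h
  refine Subtype.ext (eq_of_colLen_eq fun j => ?_)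
  rw [← colLen_prependColumn_succ, ← colLen_prependColumn_succ]
  exact congrArg (fun κ => κ.1.colLen (j + 1)) h

lemma range_prependColumnOfLE (hkN : k ≤ N) :
    Set.range (prependColumnOfLE hkN) = {μ | μ.1.colLen 0 = k} := by
  ext μ
  constructor
  · rintro ⟨ν, rfl⟩
    exact colLen_prependColumn_zero ν
  · rintro rfl
    refine ⟨⟨removeFirstColumn μ.1, ?_⟩, Subtype.ext (eq_of_colLen_eq ?_)⟩
    · rw [colLen_removeFirstColumn]
      exact μ.1.colLen_anti 0 1 zero_le_one
    · rintro (_ | j)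
      · exact colLen_prependColumn_zero _
      · exact (colLen_prependColumn_succ _ j).trans (colLen_removeFirstColumn μ.1 j)

lemma compl_range_prependColumnOfLE_self (N : ℕ) :
    (Set.range (prependColumnOfLE (le_refl N)))ᶜ = {μ | μ.1.colLen 0 < N} := by
  rw [range_prependColumnOfLE]
  ext μ
  exact μ.2.lt_iff_ne.symm

end Columns

section Summation

lemma hasSum_diagramWeight_zero (q u : ℝ) :
    HasSum (fun μ : BoundedDiagram 0 => diagramWeight q u 0 μ.1) (totalWeight q u 0) := by
  have colLen_eq_zero (μ : BoundedDiagram 0) (j : ℕ) : μ.1.colLen j = 0 :=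
    Nat.eq_zero_of_le_zero ((μ.1.colLen_anti 0 j j.zero_le).trans μ.2)
  have : Subsingleton (BoundedDiagram 0) :=
    ⟨fun μ ν => Subtype.ext (eq_of_colLen_eq fun j => by simp only [colLen_eq_zero])⟩
  let empty : BoundedDiagram 0 := ⟨⊥, (colLen_eq_of_mem_iff (by simp)).le⟩
  have weight_empty : diagramWeight q u 0 empty.1 = totalWeight q u 0 := by
    rw [diagramWeight, denomProd_eq_prod_range q (colLen_eq_zero empty 0)]
    have card_bot : (⊥ : YoungDiagram).card = 0 := card_empty
    simp [totalWeight, poch_zero, empty, card_bot]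
  exact weight_empty ▸ hasSum_single empty fun μ hμ => (hμ (Subsingleton.elim μ empty)).elim

lemma hasSum_diagramWeight_colLen_zero_lt {q u : ℝ} {S : ℕ → ℝ} {N : ℕ}
    (hsum : ∀ k < N, HasSum (fun μ : BoundedDiagram k => diagramWeight q u k μ.1) (S k)) :
    HasSum (fun μ : {μ : BoundedDiagram N | μ.1.colLen 0 < N} => diagramWeight q u N μ.1.1)
      (∑ k ∈ range N, columnWeight q u N k * S k) := by
  have hasSum_fiber : ∀ k ∈ range N,
      HasSum ((fun μ : BoundedDiagram N => diagramWeight q u N μ.1) ∘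
        ((↑) : {μ : BoundedDiagram N | μ.1.colLen 0 = k} → BoundedDiagram N))
        (columnWeight q u N k * S k) := by
    intro k hk
    have hkN := mem_range.1 hk
    rw [← range_prependColumnOfLE hkN.le]
    refine ((prependColumnOfLE_injective hkN.le).hasSum_range_iff
      (f := fun μ : BoundedDiagram N => diagramWeight q u N μ.1)).2 ?_
    simpa only [prependColumnOfLE, diagramWeight_prependColumn, comp_def] using
      (hsum k hkN).mul_left (columnWeight q u N k)
  have fibers_disjoint : (range N : Set ℕ).Pairwise
      (Disjoint on fun k => {μ : BoundedDiagram N | μ.1.colLen 0 = k}) :=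
    fun k _ l _ hkl => Set.disjoint_left.2 fun μ hk hl => hkl (hk.symm.trans hl)
  have fibers_union : {μ : BoundedDiagram N | μ.1.colLen 0 < N} =
      ⋃ k ∈ range N, {μ : BoundedDiagram N | μ.1.colLen 0 = k} := by
    ext μ
    simp
  rw [fibers_union]
  exact hasSum_sum_disjoint (range N) fibers_disjoint hasSum_fiber

end Summation

theorem stmt_13_general (q u : ℝ) (hq : 1 < |q|) (hu : |u| < |q|) (N : ℕ) :
    HasSum (fun μ : {μ : YoungDiagram // μ.colLen 0 ≤ N} =>
        u ^ μ.1.card / (poch q q⁻¹ (N - μ.1.colLen 0) * denomProd q μ.1))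
      (1 / (poch q (u / q) N * poch q q⁻¹ N)) := by
  change HasSum (fun μ : BoundedDiagram N => diagramWeight q u N μ.1) (totalWeight q u N)
  induction N using Nat.strong_induction_on with
  | _ N ih =>
    obtain rfl | hN := eq_or_ne N 0
    · exact hasSum_diagramWeight_zero q u
    have card_lt (μ : BoundedDiagram N) : μ.1.card < (prependColumn μ).card := by
      rw [card_prependColumn]
      lia
    rw [totalWeight_eq_inv_mul_sum hq hu hN]
    refine hasSum_of_map_eq_mul (fun μ => μ.1.card) (prependColumnOfLE_injective le_rfl) card_lt
      (abs_columnWeight_self_lt_one hq.le hu hN) (diagramWeight_prependColumn q u N) ?_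
    rw [compl_range_prependColumnOfLE_self]
    exact hasSum_diagramWeight_colLen_zero_lt ih

/-- For real `q > 1`, `0 < u < 1` and a nonnegative integer `N`:
`∑_λ u^{|λ|} / ((1/q)_{N−λ'_1} ∏_{i≥1} q^{(λ'_i)²} (1/q)_{m_i(λ)})
  = 1 / ((u/q)_N (1/q)_N)`,
the sum being over all partitions with at most `N` parts. -/
theorem stmt_13 (q u : ℝ) (hq : 1 < q) (hu0 : 0 < u) (hu1 : u < 1) (N : ℕ) :
    HasSum (fun μ : {μ : YoungDiagram // μ.colLen 0 ≤ N} =>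
        u ^ μ.1.card / (poch q q⁻¹ (N - μ.1.colLen 0) * denomProd q μ.1))
      (1 / (poch q (u / q) N * poch q q⁻¹ N)) := by
  have one_lt_abs_q : 1 < |q| := hq.trans_le (le_abs_self q)
  exact stmt_13_general q u one_lt_abs_q ((abs_of_pos hu0).trans_lt (hu1.trans one_lt_abs_q)) N
end
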